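/- arXiv:1906.03770 — 2 statements merged into one kernel-verified Lean document; each statement's English description precedes it below -/
import Mathlib

section
/- Let f be an orientation-preserving homeomorphism of the plane with no fixed points. Then every point of the plane is wandering for f, i.e., for every point x there exists an open neighborhood W of x such that f^n(W) ∩ W = ∅ for all n ≥ 1. -/
/-- A homeomorphism of the plane is orientation preserving if it is isotopic
to the identity through homeomorphisms. -/
def OrientationPreserving (f : ℂ ≃ₜ ℂ) : Prop :=
  ∃ H : ℝ × ℂ → ℂ, Continuous H ∧ (∀ t : ℝ, IsHomeomorph fun z => H (t, z)) ∧
    (∀ z, H (0, z) = z) ∧ (∀ z, H (1, z) = f z)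

/-!
Let `f` have no fixed points and let `H` be an isotopy from the identity to `f`. The displacement
`H (t, f z) - H (t, z)` has a continuous logarithm, whose variation rules out points of period two.

A longer recurrence is shortened to one already excluded: if a path `σ` never runs backwards under
`f`, in the sense that `f (σ t) ≠ σ s` for `s ≤ t`, then composing `f` with a homeomorphism that
pushes points forwards in a thin neighbourhood of `σ` creates no fixed point. Every point lies on a
translation arc, that is, an arc from some `y` to `f y` whose interior is disjoint from its image.
If the line formed by the iterates of the arc met itself, a push along a part of this line would
produce a point of period two. So this line is injective and `f` has no periodic point. Finally, if
a ball disjoint from its image met one of its iterates, a push along a path inside the ball would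
produce a periodic point.
-/

open Function Set Metric Filter
open scoped NNReal

theorem eq_of_cexp_eq_const {X : Type*} [TopologicalSpace X] [PreconnectedSpace X] {l : X → ℂ}
    (hl : Continuous l) {w : ℂ} (hw : ∀ x, Complex.exp (l x) = w) (x y : X) : l x = l y :=
  Complex.isCoveringMap_exp.const_of_comp hl
    (fun x y ↦ Subtype.ext ((hw x).trans (hw y).symm)) x y

theorem exists_continuous_cexp_eq {X : Type*} [TopologicalSpace X] [SimplyConnectedSpace X]
    [LocallyPathConnectedSpace X] {g : X → ℂ} (hg : Continuous g) (hg₀ : ∀ x, g x ≠ 0) :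
    ∃ l : X → ℂ, Continuous l ∧ ∀ x, Complex.exp (l x) = g x := by
  obtain ⟨x₀⟩ : Nonempty X := inferInstance
  obtain ⟨l, ⟨-, hl⟩, -⟩ := Complex.isCoveringMapOn_exp.existsUnique_continuousMap_lifts
    (⟨g, hg⟩ : C(X, ℂ)) (Complex.exp_log (hg₀ x₀)) hg₀
  exact ⟨l, l.continuous, congrFun hl⟩

theorem isHomeomorph_add_of_lipschitzWith {E : Type*} [NormedAddCommGroup E] [NormedSpace ℝ E]
    [CompleteSpace E] {K : ℝ≥0} {g : E → E} (hg : LipschitzWith K g) (hK : K < 1) :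
    IsHomeomorph fun z ↦ z + g z := by
  have happrox : ApproximatesLinearOn (fun z ↦ z + g z)
      (ContinuousLinearEquiv.refl ℝ E : E →L[ℝ] E) univ K := by
    rw [ApproximatesLinearOn.approximatesLinearOn_iff_lipschitzOnWith]
    convert hg.lipschitzOnWith
    ext z
    simp
  have hnorm : Subsingleton E ∨ K < ‖((ContinuousLinearEquiv.refl ℝ E).symm : E →L[ℝ] E)‖₊⁻¹ :=
    (ContinuousLinearEquiv.refl ℝ E).subsingleton_or_nnnorm_symm_pos.imp_right fun hpos ↦
      hK.trans_le ((one_le_inv₀ hpos).mpr ContinuousLinearMap.norm_id_le)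
  exact (happrox.toHomeomorph _ hnorm).isHomeomorph

theorem lipschitzWith_tent_smul {E : Type*} [NormedAddCommGroup E] [NormedSpace ℝ E]
    (c v : E) (r : ℝ) : LipschitzWith ‖v‖₊ fun z ↦ max (r - dist z c) 0 • v := by
  have htent : LipschitzWith 1 fun z ↦ max (r - dist z c) 0 := by
    simpa using ((LipschitzWith.const r).sub (LipschitzWith.dist_left c)).max_const 0
  simpa [comp_def] using (ContinuousLinearMap.toSpanSingleton ℝ v).lipschitz.comp htent

namespace OrientationPreserving

theorem trans {f g : ℂ ≃ₜ ℂ} (hf : OrientationPreserving f) (hg : OrientationPreserving g) :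
    OrientationPreserving (f.trans g) := by
  obtain ⟨F, hF, hFt, hF₀, hF₁⟩ := hf
  obtain ⟨G, hG, hGt, hG₀, hG₁⟩ := hg
  exact ⟨fun p ↦ G (p.1, F p), by fun_prop, fun t ↦ (hGt t).comp (hFt t),
    by simp [hF₀, hG₀], by simp [hF₁, hG₁]⟩

theorem of_lipschitzWith_sub {f : ℂ ≃ₜ ℂ} {K : ℝ≥0} (hf : LipschitzWith K fun z ↦ f z - z)
    (hK : K < 1) : OrientationPreserving f := by
  refine ⟨fun p ↦ p.2 + max 0 (min 1 p.1) • (f p.2 - p.2), by fun_prop, fun t ↦ ?_,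
    by simp, by simp⟩
  set s := max 0 (min 1 t)
  have hs : ‖s‖₊ ≤ 1 := by
    rw [← NNReal.coe_le_coe, coe_nnnorm, Real.norm_of_nonneg (le_max_left _ _)]
    simp
  have hsf : LipschitzWith (‖s‖₊ * K) fun z ↦ s • (f z - z) := (lipschitzWith_smul s).comp hf
  exact isHomeomorph_add_of_lipschitzWith hsf ((mul_le_of_le_one_left zero_le hs).trans_lt hK)

theorem apply_apply_ne {f : ℂ ≃ₜ ℂ} (hf : OrientationPreserving f) (hfix : ∀ z, f z ≠ z) (a : ℂ) :
    f (f a) ≠ a := by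
  intro ha
  obtain ⟨H, hH, hHt, hH₀, hH₁⟩ := hf
  have hne (t : ℝ) (z : ℂ) : H (t, f z) - H (t, z) ≠ 0 :=
    fun h ↦ hfix z ((hHt t).injective (sub_eq_zero.mp h))
  obtain ⟨Λ, hΛ, hexp⟩ := exists_continuous_cexp_eq
    (g := fun p : ℝ × ℂ ↦ H (p.1, f p.2) - H p) (by fun_prop) fun p ↦ hne p.1 p.2
  -- `Λ (1, z)` and `Λ (0, f z)` are logarithms of the same displacement `f (f z) - f z`, and on a
  -- 2-cycle the displacements of its two points are opposite at every time. Hence both differences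
  -- below are constant, which forces equal, yet opposite, displacements at time `1`.
  have hends : Λ (1, a) - Λ (0, f a) = Λ (1, f a) - Λ (0, a) := by
    have hconst := eq_of_cexp_eq_const (l := fun z ↦ Λ (1, z) - Λ (0, f z)) (w := 1)
      (by fun_prop) (fun z ↦ by
        simp only [Complex.exp_sub, hexp, hH₀, hH₁, div_self (sub_ne_zero.mpr (hfix _))]) a (f a)
    simpa only [ha] using hconst
  have hswap : Λ (0, f a) - Λ (0, a) = Λ (1, f a) - Λ (1, a) :=
    eq_of_cexp_eq_const (l := fun t : ℝ ↦ Λ (t, f a) - Λ (t, a)) (w := -1) (by fun_prop)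
      (fun t ↦ by
        rw [Complex.exp_sub, hexp, hexp, div_eq_iff (hne t a), ha]
        ring) 0 1
  have hlog : Λ (1, a) = Λ (1, f a) := by linear_combination (hends + hswap) / 2
  have hdisp : f (f a) - f a = f (f (f a)) - f (f a) := by
    simpa only [hexp, hH₁] using congrArg Complex.exp hlog
  rw [ha] at hdisp
  exact hfix a (by linear_combination -hdisp / 2)

end OrientationPreserving

/-- An isotopically trivial homeomorphism carrying `σ a` to `σ b` that moves points only within
the `ε`-neighbourhood of the path `σ` on `[a, b]`, and only forwards along it: a point starting
`ε`-close to `σ s` ends `ε`-close to some `σ t` with `s ≤ t`. -/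
structure IsPush (σ : ℝ → ℂ) (ε a b : ℝ) (h : ℂ ≃ₜ ℂ) : Prop where
  orientationPreserving : OrientationPreserving h
  map_left : h (σ a) = σ b
  eq_or_exists_dist_lt : ∀ z, h z = z ∨
    ∃ s t, a ≤ s ∧ s ≤ t ∧ t ≤ b ∧ dist z (σ s) < ε ∧ dist (h z) (σ t) < ε

theorem exists_homeomorph_map_eq_of_dist_lt {c p : ℂ} {r : ℝ} (hp : dist p c < r) :
    ∃ h : ℂ ≃ₜ ℂ, OrientationPreserving h ∧ h c = p ∧
      ∀ z, h z = z ∨ dist z c < r ∧ dist (h z) c < r := by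
  have hr : 0 < r := dist_nonneg.trans_lt hp
  set v := r⁻¹ • (p - c) with hv_def
  have hv : ‖v‖₊ < 1 := by
    rw [← NNReal.coe_lt_coe, coe_nnnorm, norm_smul, norm_inv, Real.norm_of_nonneg hr.le,
      ← dist_eq_norm]
    exact (inv_mul_lt_one₀ hr).mpr hp
  have hlip := lipschitzWith_tent_smul c v r
  let h := (isHomeomorph_add_of_lipschitzWith hlip hv).homeomorph
  have h_apply (z : ℂ) : h z = z + max (r - dist z c) 0 • v := rfl
  have h_out {z : ℂ} (hz : r ≤ dist z c) : h z = z := by simp [h_apply, hz]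
  refine ⟨h, .of_lipschitzWith_sub (by simpa [h_apply] using hlip) hv, ?_, fun z ↦ ?_⟩
  · simp [h_apply, hr.le, hv_def, hr.ne']
  · by_cases hz : r ≤ dist z c
    · exact .inl (h_out hz)
    by_cases hhz : r ≤ dist (h z) c
    · exact .inl (h.injective (h_out hhz))
    · exact .inr ⟨not_le.mp hz, not_le.mp hhz⟩

theorem exists_isPush_of_dist_lt {σ : ℝ → ℂ} {ε a b : ℝ} (hab : a ≤ b)
    (hd : dist (σ b) (σ a) < ε) : ∃ h, IsPush σ ε a b h := by
  obtain ⟨h, hor, hmap, hh⟩ := exists_homeomorph_map_eq_of_dist_lt hd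
  exact ⟨h, hor, hmap, fun z ↦ (hh z).imp_right fun ⟨hz, hhz⟩ ↦
    ⟨a, a, le_rfl, le_rfl, hab, hz, hhz⟩⟩

theorem IsPush.trans {σ : ℝ → ℂ} {ε a b c : ℝ} {g h : ℂ ≃ₜ ℂ} (hab : a ≤ b) (hbc : b ≤ c)
    (hg : IsPush σ ε a b g) (hh : IsPush σ ε b c h) : IsPush σ ε a c (g.trans h) := by
  refine ⟨hg.orientationPreserving.trans hh.orientationPreserving,
    by simp [hg.map_left, hh.map_left], fun z ↦ ?_⟩
  rw [Homeomorph.trans_apply]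
  rcases hg.eq_or_exists_dist_lt z with hgz | ⟨s, t, has, hst, htb, hzs, hzt⟩ <;>
    rcases hh.eq_or_exists_dist_lt (g z) with hhz | ⟨s', t', hbs', hst', htc', hzs', hzt'⟩
  · exact .inl (hhz.trans hgz)
  · exact .inr ⟨s', t', hab.trans hbs', hst', htc', by rwa [← hgz], hzt'⟩
  · exact .inr ⟨s, t, has, hst, htb.trans hbc, hzs, by rwa [hhz]⟩
  · exact .inr ⟨s, t', has, by linarith, htc', hzs, hzt'⟩

theorem exists_isPush {σ : ℝ → ℂ} {ε a b : ℝ} (hσ : ContinuousOn σ (Icc a b)) (hab : a ≤ b)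
    (hε : 0 < ε) : ∃ h, IsPush σ ε a b h := by
  obtain ⟨τ, hτ₀, hτ, ⟨m, hm⟩, hsmall⟩ := exists_monotone_Icc_subset_open_cover_Icc hab
    (c := fun p : Icc a b ↦ {q : Icc a b | dist (σ q) (σ p) < ε / 2})
    (fun p ↦ isOpen_lt (hσ.domRestrict.dist continuous_const) continuous_const)
    fun p _ ↦ mem_iUnion.mpr ⟨p, by simpa using hε⟩
  have hstep (n : ℕ) : dist (σ (τ (n + 1))) (σ (τ n)) < ε := by
    obtain ⟨p, hp⟩ := hsmall n
    have hle : τ n ≤ τ (n + 1) := hτ n.le_succ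
    have hleft : dist (σ (τ n)) (σ p) < ε / 2 := hp (left_mem_Icc.mpr hle)
    have hright : dist (σ (τ (n + 1))) (σ p) < ε / 2 := hp (right_mem_Icc.mpr hle)
    linarith [dist_triangle_right (σ (τ (n + 1))) (σ (τ n)) (σ p)]
  have hpush (n : ℕ) : ∃ h, IsPush σ ε (τ 0) (τ n) h := by
    induction n with
    | zero => exact exists_isPush_of_dist_lt le_rfl (by simpa using hε)
    | succ n ih =>
      obtain ⟨g, hg⟩ := ih
      obtain ⟨h, hh⟩ := exists_isPush_of_dist_lt (hτ n.le_succ) (hstep n)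
      exact ⟨_, hg.trans (hτ n.zero_le) (hτ n.le_succ) hh⟩
  simpa only [hτ₀, hm m le_rfl] using hpush m

theorem exists_push_comp_ne {f : ℂ → ℂ} (hf : Continuous f) (hfix : ∀ z, f z ≠ z)
    {σ : ℝ → ℂ} {a b : ℝ} (hσ : ContinuousOn σ (Icc a b)) (hab : a ≤ b)
    (hback : ∀ s t, a ≤ s → s ≤ t → t ≤ b → f (σ t) ≠ σ s)
    {K : Set ℂ} (hK : IsClosed K) (hσK : ∀ s ∈ Icc a b, σ s ∉ K) :
    ∃ h : ℂ ≃ₜ ℂ, OrientationPreserving h ∧ h (σ a) = σ b ∧ (∀ z ∈ K, h z = z) ∧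
      ∀ z, h (f z) ≠ z := by
  let P : Set (ℝ × ℝ) := Icc a b ×ˢ Icc a b ∩ {p | p.1 ≤ p.2}
  have hP : IsCompact (Prod.map σ σ '' P) :=
    ((isCompact_Icc.prod isCompact_Icc).inter_right
      (isClosed_le continuous_fst continuous_snd)).image_of_continuousOn
      ((hσ.prodMap hσ).mono inter_subset_left)
  have hgraph : Prod.map σ σ '' P ⊆ {p | f p.2 ≠ p.1} := by
    rintro _ ⟨⟨s, t⟩, ⟨⟨hs, ht⟩, hst⟩, rfl⟩
    exact hback s t hs.1 hst ht.2
  obtain ⟨ε₁, hε₁, hε₁f⟩ := hP.exists_thickening_subset_open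
    (isOpen_ne_fun (hf.comp continuous_snd) continuous_fst) hgraph
  obtain ⟨ε₂, hε₂, hε₂K⟩ := (isCompact_Icc.image_of_continuousOn hσ).exists_thickening_subset_open
    hK.isOpen_compl (image_subset_iff.mpr hσK)
  obtain ⟨h, hor, hmap, hh⟩ := exists_isPush hσ hab (lt_min hε₁ hε₂)
  refine ⟨h, hor, hmap, fun z hz ↦ ?_, fun z hz ↦ ?_⟩
  · refine (hh z).resolve_right fun ⟨s, t, has, hst, htb, hzs, _⟩ ↦ ?_
    exact hε₂K (mem_thickening_iff.mpr
      ⟨σ s, mem_image_of_mem σ ⟨has, hst.trans htb⟩, hzs.trans_le (min_le_right _ _)⟩) hz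
  · obtain ⟨s, t, has, hst, htb, hzs, hzt⟩ :=
      (hh (f z)).resolve_left fun h ↦ hfix z (h.symm.trans hz)
    rw [hz] at hzt
    have hmem : (f z, z) ∈ thickening ε₁ (Prod.map σ σ '' P) :=
      mem_thickening_iff.mpr ⟨(σ s, σ t),
        ⟨(s, t), ⟨⟨⟨has, hst.trans htb⟩, ⟨has.trans hst, htb⟩⟩, hst⟩, rfl⟩,
        (max_lt hzs hzt).trans_le (min_le_left _ _)⟩
    exact hε₁f hmem rfl

section TranslationArc

variable {X : Type*} [TopologicalSpace X] {f : X ≃ₜ X} {γ : ℝ → X}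

/-- A translation arc of `f`: a simple arc `γ` on `[0, 1]` from a point to its image which meets
its own image under `f` only at the endpoint `γ 1 = f (γ 0)`. -/
structure IsTranslationArc (f : X ≃ₜ X) (γ : ℝ → X) : Prop where
  continuousOn : ContinuousOn γ (Icc 0 1)
  injOn : InjOn γ (Icc 0 1)
  map_zero : f (γ 0) = γ 1
  eq_zero_of_map_eq : ∀ s ∈ Icc (0 : ℝ) 1, ∀ t ∈ Icc (0 : ℝ) 1, f (γ s) = γ t → s = 0

/-- The concatenation of the arcs `f ^ n ∘ γ`, `n : ℤ`, the `n`-th one on `[n, n + 1]`. -/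
noncomputable def translationLine (f : X ≃ₜ X) (γ : ℝ → X) (s : ℝ) : X :=
  (f ^ ⌊s⌋) (γ (Int.fract s))

theorem translationLine_add_intCast (f : X ≃ₜ X) (γ : ℝ → X) (s : ℝ) (m : ℤ) :
    translationLine f γ (s + m) = (f ^ m) (translationLine f γ s) := by
  rw [translationLine, Int.floor_add_intCast, Int.fract_add_intCast, add_comm, zpow_add,
    Homeomorph.mul_apply, translationLine]

theorem translationLine_add_one (f : X ≃ₜ X) (γ : ℝ → X) (s : ℝ) :
    translationLine f γ (s + 1) = f (translationLine f γ s) := by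
  simpa using translationLine_add_intCast f γ s 1

theorem translationLine_add_natCast (f : X ≃ₜ X) (γ : ℝ → X) (s : ℝ) (n : ℕ) :
    translationLine f γ (s + n) = f^[n] (translationLine f γ s) := by
  induction n with
  | zero => simp
  | succ n ih =>
    rw [Nat.cast_succ, ← add_assoc, translationLine_add_one, ih, iterate_succ_apply']

theorem translationLine_sub_floor_eq_iff (f : X ≃ₜ X) (γ : ℝ → X) (r s t : ℝ) :
    translationLine f γ (s - ⌊r⌋) = translationLine f γ (t - ⌊r⌋) ↔
      translationLine f γ s = translationLine f γ t := by
  simp only [sub_eq_add_neg, ← Int.cast_neg, translationLine_add_intCast,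
    EmbeddingLike.apply_eq_iff_eq]

theorem translationLine_of_mem_Icc (h : f (γ 0) = γ 1) {s : ℝ} (hs : s ∈ Icc (0 : ℝ) 1) :
    translationLine f γ s = γ s := by
  rcases hs.2.eq_or_lt with rfl | hs₁
  · simp [translationLine, h]
  · simp [translationLine, Int.floor_eq_zero_iff.mpr ⟨hs.1, hs₁⟩, Int.fract_eq_self.mpr ⟨hs.1, hs₁⟩]

theorem continuous_translationLine (hγ : ContinuousOn γ (Icc 0 1)) (h : f (γ 0) = γ 1) :
    Continuous (translationLine f γ) := by
  have hfirst : ContinuousOn (translationLine f γ) (Icc 0 1) :=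
    hγ.congr fun s hs ↦ translationLine_of_mem_Icc h hs
  have hsecond : ContinuousOn (translationLine f γ) (Icc 1 2) := by
    refine (f.continuous.comp_continuousOn (hfirst.comp (f := fun s : ℝ ↦ s - 1) (by fun_prop)
      fun s hs ↦ ?_)).congr fun s _ ↦ ?_
    · exact ⟨by linarith [hs.1], by linarith [hs.2]⟩
    · simp [← translationLine_add_one]
  have hunion : ContinuousOn (translationLine f γ) (Icc 0 2) := by
    rw [← Icc_union_Icc_eq_Icc zero_le_one one_le_two]
    exact hfirst.union_of_isClosed hsecond isClosed_Icc isClosed_Icc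
  refine continuous_iff_continuousAt.mpr fun s ↦ ?_
  let m : ℤ := ⌊s⌋ - 1
  have hm : translationLine f γ = fun t ↦ (f ^ m) (translationLine f γ (t - m)) := by
    ext t
    rw [← translationLine_add_intCast, sub_add_cancel]
  have hnear : ContinuousAt (translationLine f γ) (s - m) := by
    refine hunion.continuousAt (Icc_mem_nhds ?_ ?_) <;>
      simp only [m, Int.cast_sub, Int.cast_one] <;>
      linarith [Int.floor_le s, Int.lt_floor_add_one s]
  rw [hm]
  exact (f ^ m).continuous.continuousAt.comp (hnear.comp (f := fun t : ℝ ↦ t - m) (by fun_prop))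

namespace IsTranslationArc

theorem translationLine_add_one_ne (hγ : IsTranslationArc f γ) {s t : ℝ} (hs₀ : 0 < s)
    (hs₁ : s ≤ 1) (ht : t ∈ Icc (0 : ℝ) 1) :
    translationLine f γ (s + 1) ≠ translationLine f γ t := by
  rw [translationLine_add_one, translationLine_of_mem_Icc hγ.map_zero ⟨hs₀.le, hs₁⟩,
    translationLine_of_mem_Icc hγ.map_zero ht]
  exact fun h ↦ hs₀.ne' (hγ.eq_zero_of_map_eq s ⟨hs₀.le, hs₁⟩ t ht h)

theorem translationLine_add_ne (hγ : IsTranslationArc f γ) (s : ℝ) {d : ℝ} (hd₀ : 0 < d)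
    (hd₁ : d ≤ 1) : translationLine f γ (s + d) ≠ translationLine f γ s := by
  rw [Ne, ← translationLine_sub_floor_eq_iff f γ s, add_sub_right_comm, Int.self_sub_floor]
  have hs₀ := Int.fract_nonneg s
  have hs₁ := Int.fract_lt_one s
  intro h
  rcases le_or_gt (Int.fract s + d) 1 with hle | hlt
  · rw [translationLine_of_mem_Icc hγ.map_zero ⟨by linarith, hle⟩,
      translationLine_of_mem_Icc hγ.map_zero ⟨hs₀, hs₁.le⟩] at h
    linarith [hγ.injOn ⟨by linarith, hle⟩ ⟨hs₀, hs₁.le⟩ h]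
  · rw [← sub_add_cancel (Int.fract s + d) 1] at h
    exact hγ.translationLine_add_one_ne (by linarith) (by linarith) ⟨hs₀, hs₁.le⟩ h

theorem exists_minimal_loop [T2Space X] (hγ : IsTranslationArc f γ) {s₀ d₀ : ℝ} (hd₀ : 0 < d₀)
    (hloop : translationLine f γ (s₀ + d₀) = translationLine f γ s₀) :
    ∃ a c, 0 < c ∧ translationLine f γ (a + c) = translationLine f γ a ∧
      ∀ s t, s < t → t < s + c → translationLine f γ t ≠ translationLine f γ s := by
  set Γ := translationLine f γ
  have hΓ : Continuous Γ := continuous_translationLine hγ.continuousOn hγ.map_zero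
  have hlong {s d : ℝ} (hd : 0 < d) (h : Γ (s + d) = Γ s) : 1 < d :=
    lt_of_not_ge fun hd₁ ↦ hγ.translationLine_add_ne s hd hd₁ h
  have hfract {s d : ℝ} (h : Γ (s + d) = Γ s) : Γ (Int.fract s + d) = Γ (Int.fract s) := by
    rw [← Int.self_sub_floor, ← add_sub_right_comm]
    exact (translationLine_sub_floor_eq_iff f γ s _ _).mpr h
  let L : Set (ℝ × ℝ) := Icc 0 1 ×ˢ Icc 1 d₀ ∩ {p | Γ (p.1 + p.2) = Γ p.1}
  have hL_of_loop {s d : ℝ} (hd : 0 < d) (hdd₀ : d ≤ d₀) (h : Γ (s + d) = Γ s) :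
      (Int.fract s, d) ∈ L :=
    ⟨⟨⟨Int.fract_nonneg s, (Int.fract_lt_one s).le⟩, (hlong hd h).le, hdd₀⟩, hfract h⟩
  have hL : IsCompact L := (isCompact_Icc.prod isCompact_Icc).inter_right
    (isClosed_eq (by fun_prop) (by fun_prop))
  obtain ⟨⟨s, c⟩, ⟨⟨-, hc₁, hcd₀⟩, hsc⟩, hmin⟩ := hL.exists_isMinOn
    ⟨_, hL_of_loop hd₀ le_rfl hloop⟩ continuous_snd.continuousOn
  refine ⟨s, c, by linarith, hsc, fun u v huv hvu h ↦ ?_⟩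
  have hle : c ≤ v - u := isMinOn_iff.mp hmin _
    (hL_of_loop (s := u) (d := v - u) (by linarith) (by linarith) (by rwa [add_sub_cancel]))
  linarith

end IsTranslationArc

end TranslationArc

section PlanarTranslationArc

variable {f : ℂ ≃ₜ ℂ} {γ : ℝ → ℂ}

theorem OrientationPreserving.apply_right_ne_of_apply_eq_left (hf : OrientationPreserving f)
    (hfix : ∀ z, f z ≠ z) {σ : ℝ → ℂ} {a b : ℝ} (hσ : ContinuousOn σ (Icc a b)) (hab : a ≤ b)
    (hback : ∀ s t, a ≤ s → s ≤ t → t ≤ b → f (σ t) ≠ σ s) {w : ℂ}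
    (hw : ∀ s ∈ Icc a b, σ s ≠ w) (hwa : f w = σ a) : f (σ b) ≠ w := by
  intro hbw
  obtain ⟨h, hh, hmap, hhw, hhf⟩ := exists_push_comp_ne f.continuous hfix hσ hab hback
    (isClosed_singleton (x := w)) hw
  refine (hf.trans hh).apply_apply_ne hhf w ?_
  simp only [Homeomorph.trans_apply]
  rw [hwa, hmap, hbw]
  exact hhw w rfl

theorem OrientationPreserving.line_add_ne_of_two_le (hf : OrientationPreserving f)
    (hfix : ∀ z, f z ≠ z) {Γ : ℝ → ℂ} (hΓ : Continuous Γ) (hfΓ : ∀ s, f (Γ s) = Γ (s + 1))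
    {a c : ℝ} (hc : 2 ≤ c) (hsimple : ∀ s t, s < t → t < s + c → Γ t ≠ Γ s) :
    Γ (a + c) ≠ Γ a := by
  -- Pushing `f (Γ a) = Γ (a + 1)` forwards to `Γ (a + c - 1)`, whose image is `Γ (a + c)`, would
  -- give `Γ a` period two.
  have hback (s t : ℝ) (hs : a + 1 ≤ s) (hst : s ≤ t) (ht : t ≤ a + c - 1) : f (Γ t) ≠ Γ s := by
    rw [hfΓ]
    exact hsimple _ _ (by linarith) (by linarith)
  have hw (s : ℝ) (hs : s ∈ Icc (a + 1) (a + c - 1)) : Γ s ≠ Γ a :=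
    hsimple _ _ (by linarith [hs.1]) (by linarith [hs.2])
  have hend := hf.apply_right_ne_of_apply_eq_left hfix hΓ.continuousOn (by linarith) hback hw
    (hfΓ a)
  rwa [hfΓ, sub_add_cancel] at hend

theorem IsTranslationArc.translationLine_add_ne_of_lt_two (hf : OrientationPreserving f)
    (hfix : ∀ z, f z ≠ z) (hγ : IsTranslationArc f γ) (a : ℝ) {c : ℝ} (hc₀ : 0 < c)
    (hc₂ : c < 2) : translationLine f γ (a + c) ≠ translationLine f γ a := by
  rcases le_or_gt c 1 with hc₁ | hc₁
  · exact hγ.translationLine_add_ne a hc₀ hc₁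
  wlog ha : a ∈ Ico (0 : ℝ) 1 generalizing a
  · rw [Ne, ← translationLine_sub_floor_eq_iff f γ a, add_sub_right_comm, Int.self_sub_floor]
    exact this (Int.fract a) ⟨Int.fract_nonneg a, Int.fract_lt_one a⟩
  obtain ⟨ha₀, ha₁⟩ := ha
  set Γ := translationLine f γ
  have hΓ : Continuous Γ := continuous_translationLine hγ.continuousOn hγ.map_zero
  have hfΓ (s : ℝ) : f (Γ s) = Γ (s + 1) := (translationLine_add_one f γ s).symm
  have hne {s t : ℝ} (hs₁ : 1 < s) (hs₂ : s ≤ 2) (ht : t ∈ Icc (0 : ℝ) 1) : Γ s ≠ Γ t := by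
    rw [← sub_add_cancel s 1]
    exact hγ.translationLine_add_one_ne (by linarith) (by linarith) ht
  intro hac
  have hac₂ : 2 < a + c := lt_of_not_ge fun hle ↦ hne (by linarith) hle ⟨ha₀, ha₁.le⟩ hac
  -- The loop is now too short for a push forwards, so `f (Γ (a + c - 1)) = Γ a` is pushed
  -- backwards to `Γ (a + c - 2)`, giving `Γ (a + c - 1)` period two.
  have hback (s t : ℝ) (hs : -a ≤ s) (hst : s ≤ t) (ht : t ≤ -(a + c - 2)) :
      f (Γ (-t)) ≠ Γ (-s) := by
    rw [hfΓ]
    exact hne (by linarith) (by linarith) ⟨by linarith, by linarith⟩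
  have hw (s : ℝ) (hs : s ∈ Icc (-a) (-(a + c - 2))) : Γ (-s) ≠ Γ (a + c - 1) :=
    (hne (by linarith) (by linarith) ⟨by linarith [hs.2], by linarith [hs.1]⟩).symm
  have hend := hf.apply_right_ne_of_apply_eq_left hfix
    (hΓ.comp continuous_neg).continuousOn (by linarith) hback hw
    (by simp only [hfΓ, sub_add_cancel, hac, comp_apply, neg_neg])
  refine hend ?_
  rw [comp_apply, neg_neg, hfΓ]
  congr 1
  ring

theorem IsTranslationArc.injective_translationLine (hf : OrientationPreserving f)
    (hfix : ∀ z, f z ≠ z) (hγ : IsTranslationArc f γ) : Injective (translationLine f γ) := by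
  refine Injective.of_lt_imp_ne fun s t hlt hst ↦ ?_
  obtain ⟨a, c, hc₀, hac, hsimple⟩ := hγ.exists_minimal_loop (s₀ := s)
    (sub_pos.mpr hlt) (by rw [add_sub_cancel, hst])
  rcases lt_or_ge c 2 with hc₂ | hc₂
  · exact hγ.translationLine_add_ne_of_lt_two hf hfix a hc₀ hc₂ hac
  · exact hf.line_add_ne_of_two_le hfix (continuous_translationLine hγ.continuousOn hγ.map_zero)
      (fun s ↦ (translationLine_add_one f γ s).symm) hc₂ hsimple hac

end PlanarTranslationArc

section IsFree

/-- The set `U` is free for the map `f` if it is disjoint from its image. -/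
def IsFree {X : Type*} (f : X → X) (U : Set X) : Prop :=
  Disjoint (f '' U) U

theorem IsFree.apply_notMem {X : Type*} {f : X → X} {U : Set X} (hU : IsFree f U) {z : X}
    (hz : z ∈ U) : f z ∉ U :=
  disjoint_left.mp hU (mem_image_of_mem f hz)

variable {X : Type*} [TopologicalSpace X] {U : Set X}

theorem IsFree.apply_notMem_closure {f : X → X} (hU : IsFree f U) (hf : IsOpenMap f)
    (hUo : IsOpen U) {z : X} (hz : z ∈ U) : f z ∉ closure U :=
  disjoint_left.mp (hU.closure_right (hf U hUo)) (mem_image_of_mem f hz)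

theorem IsFree.apply_notMem_of_mem_closure {f : X → X} (hU : IsFree f U) (hf : Continuous f)
    (hUo : IsOpen U) {z : X} (hz : z ∈ closure U) : f z ∉ U :=
  disjoint_left.mp ((hU.closure_left hUo).mono_left (image_closure_subset_closure_image hf))
    (mem_image_of_mem f hz)

theorem IsFree.isTranslationArc {f : X ≃ₜ X} {γ : ℝ → X} (hU : IsFree f U) (hUo : IsOpen U)
    (hγ : ContinuousOn γ (Icc 0 1)) (hinj : InjOn γ (Icc 0 1)) (hγU : MapsTo γ (Ioo 0 1) U)
    (hmap : f (γ 0) = γ 1) (hswap : f (f (γ 0)) ≠ γ 0) : IsTranslationArc f γ := by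
  have hclosure : MapsTo γ (Icc 0 1) (closure U) := by
    rw [← closure_Ioo (zero_ne_one' ℝ)] at hγ ⊢
    exact hγU.closure_of_continuousOn hγ
  refine ⟨hγ, hinj, hmap, fun s hs t ht hst ↦ ?_⟩
  rcases hs.1.eq_or_lt with hs₀ | hs₀
  · exact hs₀.symm
  exfalso
  rcases hs.2.eq_or_lt with rfl | hs₁
  · rcases ht.1.eq_or_lt with rfl | ht₀
    · exact hswap (by rw [hmap, hst])
    rcases ht.2.eq_or_lt with rfl | ht₁
    · exact one_ne_zero (hinj hs (left_mem_Icc.mpr zero_le_one) (f.injective (hst.trans hmap.symm)))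
    · exact hU.apply_notMem_of_mem_closure f.continuous hUo (hclosure hs)
        (hst ▸ hγU ⟨ht₀, ht₁⟩)
  · exact hU.apply_notMem_closure f.isOpenMap hUo (hγU ⟨hs₀, hs₁⟩) (hst ▸ hclosure ht)

end IsFree

section vee

variable {E : Type*} [NormedAddCommGroup E] [NormedSpace ℝ E] {x y z : E} {r : ℝ}

/-- The broken line through `y`, `x` and `z`, passed at the times `1`, `0` and `-1`. -/
def vee (x y z : E) (w : ℝ) : E :=
  x + w⁺ • (y - x) + w⁻ • (z - x)

theorem continuous_vee (x y z : E) : Continuous (vee x y z) := by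
  unfold vee
  simp only [posPart_def, negPart_def]
  fun_prop

theorem vee_of_nonneg {w : ℝ} (hw : 0 ≤ w) : vee x y z w = x + w • (y - x) := by
  simp [vee, posPart_of_nonneg hw, negPart_of_nonneg hw]

theorem vee_neg (x y z : E) (w : ℝ) : vee x y z (-w) = vee x z y w := by
  simp only [vee, posPart_neg, negPart_neg]
  abel

theorem dist_vee_left (hy : y ∈ sphere x r) (hz : z ∈ sphere x r) (w : ℝ) :
    dist (vee x y z w) x = |w| * r := by
  wlog hw : 0 ≤ w generalizing y z w
  · rw [← neg_neg w, vee_neg, this hz hy (-w) (by linarith), neg_neg, abs_neg]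
  · rw [vee_of_nonneg hw, dist_self_add_left, norm_smul, Real.norm_eq_abs,
      mem_sphere_iff_norm.mp hy]

theorem vee_injective (hy : y ∈ sphere x r) (hz : z ∈ sphere x r) (hr : r ≠ 0) (hyz : y ≠ z) :
    Injective (vee x y z) := by
  have hneg {w : ℝ} (h : vee x y z w = vee x y z (-w)) : w = 0 := by
    wlog hw : 0 ≤ w generalizing y z w
    · exact neg_eq_zero.mp
        (this hz hy hyz.symm (by rw [vee_neg, vee_neg, h, vee_neg]) (by linarith))
    rw [vee_neg, vee_of_nonneg hw, vee_of_nonneg hw, add_right_inj] at h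
    by_contra hw₀
    exact hyz (sub_left_injective (smul_right_injective E hw₀ h))
  intro w w' h
  have habs : |w| = |w'| := mul_right_cancel₀ hr <| by
    rw [← dist_vee_left hy hz, ← dist_vee_left hy hz, h]
  rcases abs_eq_abs.mp habs with rfl | rfl
  · rfl
  · rw [hneg h.symm, neg_zero]

end vee

section ProperSpace

variable {E : Type*} [NormedAddCommGroup E] [NormedSpace ℝ E] [ProperSpace E] {f : E ≃ₜ E}

theorem exists_isFree_ball (hfix : ∀ z, f z ≠ z) (x : E) :
    ∃ r > 0, ∃ y ∈ sphere x r, f y ∈ sphere x r ∧ IsFree f (ball x r) := by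
  have htendsto : Tendsto (fun z ↦ max (dist x z) (dist x (f z))) (cocompact E) atTop :=
    tendsto_atTop_mono (fun z ↦ le_max_left _ _) (tendsto_dist_left_cocompact_atTop x)
  obtain ⟨y, hmin⟩ := Continuous.exists_forall_le (by fun_prop) htendsto
  set r := max (dist x y) (dist x (f y))
  have hr : 0 < r := by
    by_contra! hr
    obtain ⟨hy, hfy⟩ := max_le_iff.mp hr
    exact hfix y ((dist_le_zero.mp hfy).symm.trans (dist_le_zero.mp hy))
  have hfree : IsFree f (ball x r) := by
    refine disjoint_left.mpr ?_
    rintro _ ⟨z, hz, rfl⟩ hfz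
    exact (hmin z).not_gt (max_lt (mem_ball'.mp hz) (mem_ball'.mp hfz))
  have hclosure : closure (ball x r) = closedBall x r := closure_ball x hr.ne'
  have hy : y ∈ closedBall x r := mem_closedBall'.mpr (le_max_left _ _)
  have hfy : f y ∈ closedBall x r := mem_closedBall'.mpr (le_max_right _ _)
  rw [← hclosure] at hy hfy
  have hy' : y ∉ ball x r := fun h ↦ hfree.apply_notMem_closure f.isOpenMap isOpen_ball h hfy
  have hfy' : f y ∉ ball x r := hfree.apply_notMem_of_mem_closure f.continuous isOpen_ball hy
  rw [hclosure, ← ball_union_sphere] at hy hfy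
  exact ⟨r, hr, y, hy.resolve_left hy', hfy.resolve_left hfy', hfree⟩

theorem exists_isTranslationArc (hswap : ∀ z, f (f z) ≠ z) (x : E) :
    ∃ γ, IsTranslationArc f γ ∧ γ (1 / 2) = x := by
  have hfix (z : E) : f z ≠ z := fun h ↦ hswap z (by rw [h, h])
  obtain ⟨r, hr, y, hy, hfy, hfree⟩ := exists_isFree_ball hfix x
  let γ (u : ℝ) : E := vee x y (f y) (1 - 2 * u)
  have hγ : Continuous γ := (continuous_vee x y (f y)).comp (by fun_prop)
  have hγ_inj : Injective γ :=
    (vee_injective hy hfy hr.ne' (hfix y).symm).comp fun u v h ↦ by linarith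
  have hγ₀ : γ 0 = y := by simp [γ, vee]
  have hγ₁ : γ 1 = f y := by
    simp only [γ]
    norm_num [vee]
  have hγ_ball : MapsTo γ (Ioo 0 1) (ball x r) := fun u ⟨hu₀, hu₁⟩ ↦ by
    rw [mem_ball, dist_vee_left hy hfy]
    exact mul_lt_of_lt_one_left hr (abs_lt.mpr ⟨by linarith, by linarith⟩)
  exact ⟨γ, hfree.isTranslationArc isOpen_ball hγ.continuousOn hγ_inj.injOn hγ_ball
    (by rw [hγ₀, hγ₁]) (hswap _), by simp [γ, vee]⟩

end ProperSpace

section FreeSets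

variable {f : ℂ ≃ₜ ℂ}

theorem OrientationPreserving.notMem_periodicPts (hf : OrientationPreserving f)
    (hfix : ∀ z, f z ≠ z) (x : ℂ) : x ∉ periodicPts f := by
  rintro ⟨n, hn, hx⟩
  obtain ⟨γ, hγ, rfl⟩ := exists_isTranslationArc (hf.apply_apply_ne hfix) x
  have hmid : translationLine f γ (1 / 2) = γ (1 / 2) :=
    translationLine_of_mem_Icc hγ.map_zero ⟨by norm_num, by norm_num⟩
  have hloop : translationLine f γ (1 / 2 + n) = translationLine f γ (1 / 2) := by
    rw [translationLine_add_natCast, hmid, hx]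
  have hn₀ : (n : ℝ) = 0 := by simpa using hγ.injective_translationLine hf hfix hloop
  exact hn.ne' (mod_cast hn₀)

theorem iterate_comp_apply_eq {X : Type*} {f h : X → X} {x : X} {n : ℕ}
    (hh : ∀ i, 1 ≤ i → i ≤ n → h (f^[i] x) = f^[i] x) : (h ∘ f)^[n] x = f^[n] x := by
  induction n with
  | zero => rfl
  | succ n ih =>
    rw [iterate_succ_apply', ih fun i hi hin ↦ hh i hi (by lia), comp_apply,
      ← iterate_succ_apply' f, hh _ (by lia) le_rfl]

theorem IsFree.disjoint_iterate_image {U : Set ℂ} (hU : IsFree f U)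
    (hf : OrientationPreserving f) (hfix : ∀ z, f z ≠ z) (hUc : IsPathConnected U) {n : ℕ}
    (hn : 1 ≤ n) : Disjoint (f^[n] '' U) U := by
  induction n using Nat.strong_induction_on with
  | _ n ih =>
  refine disjoint_left.mpr ?_
  rintro _ ⟨x, hx, rfl⟩ hfx
  have hjoined : JoinedIn U (f^[n] x) x := hUc.joinedIn _ hfx _ hx
  set σ := hjoined.somePath
  have hσU (s : ℝ) : σ.extend s ∈ U := hjoined.somePath_mem _
  let K : Set ℂ := (fun i ↦ f^[i] x) '' Ico 1 n
  have hσK (s : ℝ) : σ.extend s ∉ K := by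
    rintro ⟨i, ⟨hi₁, hin⟩, hi⟩
    replace hi : f^[i] x = σ.extend s := hi
    exact disjoint_left.mp (ih i hin hi₁) (mem_image_of_mem _ hx) (hi ▸ hσU s)
  obtain ⟨h, hh, hmap, hhK, hhf⟩ := exists_push_comp_ne f.continuous hfix
    (σ := σ.extend) (a := 0) (b := 1) σ.continuous_extend.continuousOn zero_le_one
    (fun s t _ _ _ hst ↦ hU.apply_notMem (hσU t) (hst ▸ hσU s))
    (K := K) ((finite_Ico 1 n).image _).isClosed fun s _ ↦ hσK s
  rw [Path.extend_zero, Path.extend_one] at hmap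
  refine (hf.trans hh).notMem_periodicPts hhf x ⟨n, hn, ?_⟩
  obtain ⟨m, rfl⟩ := Nat.exists_eq_add_of_le' hn
  have hm : (h ∘ f)^[m] x = f^[m] x :=
    iterate_comp_apply_eq fun i hi him ↦ hhK _ ⟨i, ⟨hi, by lia⟩, rfl⟩
  change (h ∘ f)^[m + 1] x = x
  rw [iterate_succ_apply', hm, comp_apply, ← iterate_succ_apply' f, hmap]

end FreeSets

/-- Brouwer: an orientation-preserving, fixed-point-free homeomorphism of the
plane has only wandering points. -/
theorem brouwer_all_points_wandering (f : ℂ ≃ₜ ℂ)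
    (hor : OrientationPreserving f) (hfix : ∀ z : ℂ, f z ≠ z) :
    ∀ x : ℂ, ∃ W : Set ℂ, IsOpen W ∧ x ∈ W ∧
      ∀ n : ℕ, 1 ≤ n → (⇑f)^[n] '' W ∩ W = ∅ := by
  intro x
  obtain ⟨r, hr, -, -, -, hfree⟩ := exists_isFree_ball hfix x
  exact ⟨ball x r, isOpen_ball, mem_ball_self hr, fun n hn ↦
    (hfree.disjoint_iterate_image hor hfix
      ((convex_ball x r).isPathConnected (nonempty_ball.mpr hr)) hn).inter_eq⟩
end

section
/- Let f be an orientation-preserving homeomorphism of the plane with a nonempty compact invariant set K, and let U be a connected open neighborhood of K. Then f has a fixed point in Fill(U ∪ f(U)), the union of U ∪ f(U) with all bounded connected components of its complement. -/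
/-- `Fill A` is `A` together with all bounded connected components of its
complement. -/
def Fill (A : Set ℂ) : Set ℂ :=
  A ∪ {z : ℂ | z ∉ A ∧ Bornology.IsBounded (connectedComponentIn Aᶜ z)}

/-!
Pushing one point of `K` inside a small ball closes up an almost periodic orbit of `f` in `K`
without creating fixed points, so it suffices to treat an orientation-preserving homeomorphism `g`
with a periodic orbit in `U`. Join a point `y` of this orbit to `g y` through `y` by a translation
arc in `U`; its iterates form a line `β` with `g (β u) = β (u + 1)`, which returns to `y`. Along a
simple loop of `β` the displacement `g z - z` makes a full turn, so `g` has a fixed point `p` that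
the loop surrounds. If `g` had no fixed point in `Fill (U ∪ g U)`, then `p` would lie outside it and
`z - p` would have a continuous logarithm there. Lifting the isotopy and `β` through
`z ↦ p + exp z` therefore preserves the whole configuration, the periodic orbit included, but opens
up the loop; after finitely many lifts no return is left, contradicting periodicity.

Winding numbers enter only through continuous logarithms: a loop `S` surrounds `c` when `z - c` has
no continuous logarithm on `S`.
-/

open Set Filter Topology Metric

namespace FixedPointInFill

/-! ### Continuous logarithms -/

section Logarithm

variable {E F : Type*} [TopologicalSpace E] [TopologicalSpace F]

/-- `L` is a continuous branch of `log f` on `S`. -/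
structure IsLogOn (L f : E → ℂ) (S : Set E) : Prop where
  continuousOn : ContinuousOn L S
  exp_eq : ∀ x ∈ S, Complex.exp (L x) = f x

/-- `f` has a continuous branch of the logarithm on `S`. -/
def HasLogOn (f : E → ℂ) (S : Set E) : Prop :=
  ∃ L, IsLogOn L f S

/-- Every nonvanishing continuous function on `X` has a continuous branch of the logarithm. For
compact `X ⊆ ℂ` this says that `X` does not separate the plane, and it plays the role of simple
connectedness throughout. -/
def HasContinuousLogs (X : Set E) : Prop :=
  ∀ ⦃h : E → ℂ⦄, ContinuousOn h X → (∀ x ∈ X, h x ≠ 0) → HasLogOn h X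

variable {L L₁ L₂ f f₁ f₂ : E → ℂ} {S T : Set E}

lemma IsLogOn.mono (hL : IsLogOn L f T) (hST : S ⊆ T) : IsLogOn L f S :=
  ⟨hL.continuousOn.mono hST, fun x hx => hL.exp_eq x (hST hx)⟩

lemma IsLogOn.congr (hL : IsLogOn L f₁ S) (h : EqOn f₁ f₂ S) : IsLogOn L f₂ S :=
  ⟨hL.continuousOn, fun x hx => (hL.exp_eq x hx).trans (h hx)⟩

lemma IsLogOn.comp (hL : IsLogOn L f S) {g : F → E} {T : Set F} (hg : ContinuousOn g T)
    (hgT : MapsTo g T S) : IsLogOn (fun x => L (g x)) (fun x => f (g x)) T :=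
  ⟨hL.continuousOn.comp hg hgT, fun _ hx => hL.exp_eq _ (hgT hx)⟩

lemma IsLogOn.mul (h₁ : IsLogOn L₁ f₁ S) (h₂ : IsLogOn L₂ f₂ S) :
    IsLogOn (fun x => L₁ x + L₂ x) (fun x => f₁ x * f₂ x) S :=
  ⟨h₁.continuousOn.add h₂.continuousOn,
    fun x hx => by rw [Complex.exp_add, h₁.exp_eq x hx, h₂.exp_eq x hx]⟩

lemma IsLogOn.zpow (hL : IsLogOn L f S) (n : ℤ) :
    IsLogOn (fun x => n * L x) (fun x => f x ^ n) S :=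
  ⟨continuousOn_const.mul hL.continuousOn,
    fun x hx => by rw [Complex.exp_int_mul, hL.exp_eq x hx]⟩

lemma IsLogOn.inv (hL : IsLogOn L f S) : IsLogOn (fun x => -L x) (fun x => (f x)⁻¹) S :=
  ⟨hL.continuousOn.neg, fun x hx => by rw [Complex.exp_neg, hL.exp_eq x hx]⟩

lemma IsLogOn.add_int_mul (hL : IsLogOn L f S) (n : ℤ) :
    IsLogOn (fun x => L x + n * (2 * Real.pi * Complex.I)) f S :=
  ⟨hL.continuousOn.add continuousOn_const, fun x hx => by
    rw [Complex.exp_add, Complex.exp_int_mul_two_pi_mul_I, mul_one, hL.exp_eq x hx]⟩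

lemma isLogOn_log (hf : ContinuousOn f S) (hS : MapsTo f S Complex.slitPlane) :
    IsLogOn (fun x => Complex.log (f x)) f S :=
  ⟨hf.clog hS, fun _ hx => Complex.exp_log (Complex.slitPlane_ne_zero (hS hx))⟩

lemma isLogOn_const {c : ℂ} (hc : c ≠ 0) (S : Set E) :
    IsLogOn (fun _ => Complex.log c) (fun _ => c) S :=
  ⟨continuousOn_const, fun _ _ => Complex.exp_log hc⟩

lemma HasLogOn.mono (hf : HasLogOn f T) (hST : S ⊆ T) : HasLogOn f S :=
  hf.imp fun _ hL => hL.mono hST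

lemma HasLogOn.congr (hf : HasLogOn f₁ S) (h : EqOn f₁ f₂ S) : HasLogOn f₂ S :=
  hf.imp fun _ hL => hL.congr h

lemma HasLogOn.comp (hf : HasLogOn f S) {g : F → E} {T : Set F} (hg : ContinuousOn g T)
    (hgT : MapsTo g T S) : HasLogOn (fun x => f (g x)) T :=
  let ⟨_, hL⟩ := hf
  ⟨_, hL.comp hg hgT⟩

lemma HasLogOn.mul (h₁ : HasLogOn f₁ S) (h₂ : HasLogOn f₂ S) :
    HasLogOn (fun x => f₁ x * f₂ x) S :=
  let ⟨_, hL₁⟩ := h₁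
  let ⟨_, hL₂⟩ := h₂
  ⟨_, hL₁.mul hL₂⟩

lemma HasLogOn.inv (hf : HasLogOn f S) : HasLogOn (fun x => (f x)⁻¹) S :=
  let ⟨_, hL⟩ := hf
  ⟨_, hL.inv⟩

lemma HasLogOn.div (h₁ : HasLogOn f₁ S) (h₂ : HasLogOn f₂ S) :
    HasLogOn (fun x => f₁ x / f₂ x) S := by
  simpa only [div_eq_mul_inv] using h₁.mul h₂.inv

lemma HasLogOn.ne_zero (hf : HasLogOn f S) {x : E} (hx : x ∈ S) : f x ≠ 0 := by
  obtain ⟨L, hL⟩ := hf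
  exact hL.exp_eq x hx ▸ Complex.exp_ne_zero _

lemma HasLogOn.exists_apply_eq (hf : HasLogOn f S) {x : E} (hx : x ∈ S) {w : ℂ}
    (hw : Complex.exp w = f x) : ∃ L, IsLogOn L f S ∧ L x = w := by
  obtain ⟨L, hL⟩ := hf
  refine ⟨fun y => L y + (w - L x), ⟨hL.continuousOn.add continuousOn_const, fun y hy => ?_⟩,
    add_sub_cancel _ _⟩
  rw [Complex.exp_add, Complex.exp_sub, hw, ← hL.exp_eq x hx, div_self (Complex.exp_ne_zero _),
    mul_one, hL.exp_eq y hy]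

lemma IsLogOn.exists_int_sub (h₁ : IsLogOn L₁ f S) (h₂ : IsLogOn L₂ f S) :
    ∃ n : E → ℤ, ContinuousOn n S ∧
      ∀ x ∈ S, L₁ x - L₂ x = n x * (2 * Real.pi * Complex.I) := by
  have exists_int : ∀ x, ∃ n : ℤ, x ∈ S → L₁ x = L₂ x + n * (2 * Real.pi * Complex.I) := by
    intro x
    by_cases hx : x ∈ S
    · obtain ⟨n, hn⟩ := Complex.exp_eq_exp_iff_exists_int.1
        ((h₁.exp_eq x hx).trans (h₂.exp_eq x hx).symm)
      exact ⟨n, fun _ => hn⟩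
    · exact ⟨0, fun h => (hx h).elim⟩
  choose n hn using exists_int
  refine ⟨n, ?_, fun x hx => sub_eq_of_eq_add' (hn x hx)⟩
  rw [Int.isClosedEmbedding_coe_real.isInducing.continuousOn_iff]
  have quotient_continuous :
      ContinuousOn (fun x => ((L₁ x - L₂ x) / (2 * Real.pi * Complex.I)).re) S :=
    Complex.continuous_re.comp_continuousOn
      ((h₁.continuousOn.sub h₂.continuousOn).div_const _)
  refine quotient_continuous.congr fun x hx => ?_
  simp only [Function.comp_apply]
  rw [hn x hx, add_sub_cancel_left, mul_div_cancel_right₀ _ Complex.two_pi_I_ne_zero]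
  simp

lemma IsLogOn.sub_eq_sub (h₁ : IsLogOn L₁ f S) (h₂ : IsLogOn L₂ f S) (hS : IsPreconnected S)
    {x y : E} (hx : x ∈ S) (hy : y ∈ S) : L₁ x - L₂ x = L₁ y - L₂ y := by
  obtain ⟨n, hn, hsub⟩ := h₁.exists_int_sub h₂
  rw [hsub x hx, hsub y hy, hS.constant hn hx hy]

lemma IsLogOn.eqOn (h₁ : IsLogOn L₁ f S) (h₂ : IsLogOn L₂ f S) (hS : IsPreconnected S)
    {x : E} (hx : x ∈ S) (h : L₁ x = L₂ x) : EqOn L₁ L₂ S := fun y hy => by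
  rw [← sub_eq_zero, ← h₁.sub_eq_sub h₂ hS hx hy, h, sub_self]

lemma IsLogOn.union (h₁ : IsLogOn L₁ f S) (h₂ : IsLogOn L₂ f T) (hS : IsClosed S)
    (hT : IsClosed T) (h : EqOn L₁ L₂ (S ∩ T)) : HasLogOn f (S ∪ T) := by
  classical
  have eq_left : EqOn (S.piecewise L₁ L₂) L₁ S := piecewise_eqOn S L₁ L₂
  have eq_right : EqOn (S.piecewise L₁ L₂) L₂ T := fun x hx => by
    by_cases hxS : x ∈ S
    · rw [piecewise_eq_of_mem _ _ _ hxS, h ⟨hxS, hx⟩]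
    · rw [piecewise_eq_of_notMem _ _ _ hxS]
  refine ⟨S.piecewise L₁ L₂, (h₁.continuousOn.congr eq_left).union_of_isClosed
    (h₂.continuousOn.congr eq_right) hS hT, ?_⟩
  rintro x (hx | hx)
  · rw [eq_left hx, h₁.exp_eq x hx]
  · rw [eq_right hx, h₂.exp_eq x hx]

lemma HasLogOn.union (hfS : HasLogOn f S) (hfT : HasLogOn f T) (hS : IsClosed S)
    (hT : IsClosed T) (hST : IsPreconnected (S ∩ T)) : HasLogOn f (S ∪ T) := by
  obtain ⟨L₁, h₁⟩ := hfS
  rcases (S ∩ T).eq_empty_or_nonempty with hempty | ⟨x, hx⟩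
  · obtain ⟨L₂, h₂⟩ := hfT
    exact h₁.union h₂ hS hT (by simp [hempty])
  · obtain ⟨L₂, h₂, hx₂⟩ := hfT.exists_apply_eq hx.2 (h₁.exp_eq x hx.1)
    exact h₁.union h₂ hS hT ((h₁.mono inter_subset_left).eqOn (h₂.mono inter_subset_right) hST hx
      hx₂.symm)

lemma HasContinuousLogs.image (hS : HasContinuousLogs S) {g : E → F} {r : F → E}
    (hg : ContinuousOn g S) (hr : ContinuousOn r (g '' S)) (hrg : LeftInvOn r g S) :
    HasContinuousLogs (g '' S) := by
  intro h hh h_ne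
  have hlog : HasLogOn (fun x => h (g x)) S :=
    hS (hh.comp hg (mapsTo_image g S)) fun x hx => h_ne _ (mem_image_of_mem g hx)
  refine (hlog.comp hr (hrg.mapsTo (surjOn_image g S))).congr ?_
  rintro _ ⟨x, hx, rfl⟩
  simp only [hrg hx]

lemma exists_continuousOn_image_comp_eq [T2Space F] (hS : IsCompact S) {g : E → F}
    (hg : ContinuousOn g S) {b : E → ℂ} (hb : ContinuousOn b S)
    (hgb : ∀ x ∈ S, ∀ y ∈ S, g x = g y → b x = b y) :
    ∃ V : F → ℂ, ContinuousOn V (g '' S) ∧ ∀ x ∈ S, V (g x) = b x := by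
  rcases S.eq_empty_or_nonempty with rfl | ⟨x₀, -⟩
  · exact ⟨0, by simp⟩
  have : Nonempty E := ⟨x₀⟩
  have : CompactSpace S := isCompact_iff_compactSpace.1 hS
  have comp_eq : ∀ x ∈ S, b (Function.invFunOn g S (g x)) = b x := fun x hx =>
    hgb _ (Function.invFunOn_mem ⟨x, hx, rfl⟩) x hx (Function.invFunOn_eq ⟨x, hx, rfl⟩)
  refine ⟨fun y => b (Function.invFunOn g S y), ?_, comp_eq⟩
  have quotient : IsQuotientMap ((mapsTo_image g S).restrict g S (g '' S)) :=
    .of_surjective_continuous (fun ⟨_, x, hx, hxy⟩ => ⟨⟨x, hx⟩, Subtype.ext hxy⟩)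
      (hg.mapsToRestrict (mapsTo_image g S))
  rw [continuousOn_iff_continuous_domRestrict, quotient.continuous_iff]
  exact (continuousOn_iff_continuous_domRestrict.1 hb).congr fun x => (comp_eq x x.2).symm

end Logarithm

lemma hasContinuousLogs_of_convex {E : Type*} [AddCommGroup E] [TopologicalSpace E] [Module ℝ E]
    [IsTopologicalAddGroup E] [ContinuousSMul ℝ E] {S : Set E} (hS : Convex ℝ S) :
    HasContinuousLogs S := by
  intro h hc h0
  rcases S.eq_empty_or_nonempty with rfl | ⟨x₀, hx₀⟩
  · exact ⟨0, by simp, by simp⟩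
  have segment_mem (s : unitInterval) (x : S) : x₀ + (s : ℝ) • ((x : E) - x₀) ∈ S :=
    hS.add_smul_sub_mem hx₀ x.2 s.2
  let contraction : C(unitInterval × S, {z : ℂ // z ≠ 0}) :=
    ⟨fun p => ⟨h (x₀ + (p.1 : ℝ) • ((p.2 : E) - x₀)), h0 _ (segment_mem _ _)⟩,
      .subtype_mk (hc.comp_continuous (by fun_prop) fun p => segment_mem _ _) _⟩
  let startLog : C(S, ℂ) := .const S (Complex.log (h x₀))
  have start_eq : ∀ x, contraction (0, x) =
      (fun z : ℂ => (⟨_, z.exp_ne_zero⟩ : {z : ℂ // z ≠ 0})) (startLog x) := fun x =>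
    Subtype.ext (by simp [contraction, startLog, Complex.exp_log (h0 x₀ hx₀)])
  let lift := Complex.isCoveringMap_exp.liftHomotopy contraction startLog start_eq
  have exp_lift (x : S) : Complex.exp (lift (1, x)) = h x := by
    refine (congrArg Subtype.val (congrFun
      (Complex.isCoveringMap_exp.liftHomotopy_lifts contraction startLog start_eq) (1, x))).trans ?_
    simp [contraction]
  classical
  refine ⟨fun x => if hx : x ∈ S then lift (1, ⟨x, hx⟩) else 0, ?_, fun x hx => ?_⟩
  · rw [continuousOn_iff_continuous_domRestrict]
    have : Continuous fun x : S => lift (1, x) := by fun_prop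
    exact this.congr fun x => by simp
  · simpa only [hx, dif_pos] using exp_lift ⟨x, hx⟩

/-! ### Factorization of nonvanishing functions on compact plane sets -/

lemma Icc_induction {P : ℝ → ℝ → Prop} {a b : ℝ} (hab : a ≤ b)
    (locally : ∀ x ∈ Icc a b, ∃ V ∈ 𝓝 x, ∀ c d, c ≤ d → Icc c d ⊆ V → P c d)
    (trans : ∀ c d e, c ≤ d → d ≤ e → P c d → P d e → P c e) : P a b := by
  choose! V hV hP using locally
  obtain ⟨t, ht0, hmono, ⟨m, htm⟩, hsub⟩ := exists_monotone_Icc_subset_open_cover_Icc hab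
    (c := fun x : Icc a b => Subtype.val ⁻¹' interior (V x))
    (fun x => isOpen_interior.preimage continuous_subtype_val)
    (fun x _ => mem_iUnion.2 ⟨x, mem_interior_iff_mem_nhds.2 (hV x x.2)⟩)
  have step (n : ℕ) : P (t n) (t (n + 1)) := by
    obtain ⟨x, hx⟩ := hsub n
    refine hP x x.2 _ _ (hmono n.le_succ) fun y hy => interior_subset (hx (a := ⟨y, ?_⟩) hy)
    exact ⟨(t n).2.1.trans hy.1, hy.2.trans (t (n + 1)).2.2⟩
  have from_start (n : ℕ) : P (t 0) (t (n + 1)) := by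
    induction n with
    | zero => exact step 0
    | succ n ih => exact trans _ _ _ (hmono n.succ.zero_le) (hmono n.succ.le_succ) ih (step _)
  have := from_start m
  rwa [ht0, htm _ m.le_succ] at this

lemma HasLogOn.exists_isOpen_superset {E : Type*} [TopologicalSpace E] [NormalSpace E]
    {S Y : Set E} {h : E → ℂ} (hS : IsClosed S) (hh : ContinuousOn h Y) (hlog : HasLogOn h S) :
    ∃ V, IsOpen V ∧ S ∩ Y ⊆ V ∧ HasLogOn h (Y ∩ V) := by
  obtain ⟨L, hL⟩ := hlog
  obtain ⟨G, hG⟩ := ContinuousMap.exists_restrict_eq hS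
    ⟨S.domRestrict L, hL.continuousOn.domRestrict⟩
  have eq_G : ∀ x ∈ S, G x = L x := fun x hx => DFunLike.congr_fun hG ⟨x, hx⟩
  have ratio_continuous : ContinuousOn (fun x => h x * Complex.exp (-G x)) Y :=
    hh.mul (by fun_prop)
  obtain ⟨V, hV, hYV⟩ := continuousOn_iff'.1 ratio_continuous _ Complex.isOpen_slitPlane
  refine ⟨V, hV, fun x hx => ?_, ?_⟩
  · have ratio_one : h x * Complex.exp (-G x) = 1 := by
      rw [eq_G x hx.1, ← hL.exp_eq x hx.1, ← Complex.exp_add, add_neg_cancel, Complex.exp_zero]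
    exact (hYV.subset ⟨by rw [mem_preimage, ratio_one]; exact Complex.one_mem_slitPlane, hx.2⟩).1
  · have ratio_log : HasLogOn (fun x => h x * Complex.exp (-G x)) (Y ∩ V) :=
      ⟨_, isLogOn_log (ratio_continuous.mono inter_subset_left)
        fun x hx => (hYV.superset ⟨hx.2, hx.1⟩).1⟩
    have exp_log : HasLogOn (fun x => Complex.exp (G x)) (Y ∩ V) :=
      ⟨G, G.continuous.continuousOn, fun _ _ => rfl⟩
    refine (ratio_log.mul exp_log).congr fun x _ => ?_
    simp only [mul_assoc, ← Complex.exp_add, neg_add_cancel, Complex.exp_zero, mul_one]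

lemma exists_subset_Icc {Z : Set ℝ} (hZ : IsCompact Z) : ∃ a b, a ≤ b ∧ Z ⊆ Icc a b := by
  obtain ⟨r, hr, hZr⟩ := hZ.isBounded.subset_closedBall_lt 0 0
  rw [Real.closedBall_eq_Icc] at hZr
  exact ⟨_, _, by linarith, hZr⟩

lemma hasContinuousLogs_of_isCompact_real {Z : Set ℝ} (hZ : IsCompact Z) :
    HasContinuousLogs Z := by
  intro h hh h_ne
  obtain ⟨a, b, hab, hZab⟩ := exists_subset_Icc hZ
  refine Icc_induction (P := fun c d => HasLogOn h (Z ∩ Icc c d)) hab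
    (fun x _ => ?_) (fun c d e hcd hde hc hd => ?_) |>.mono fun y hy => ⟨hy, hZab hy⟩
  · have point_log : HasLogOn h ({x} ∩ Z) := by
      by_cases hx : x ∈ Z
      · refine HasLogOn.congr ⟨_, isLogOn_const (h_ne x hx) _⟩ ?_
        rintro y ⟨rfl, -⟩
        rfl
      · exact ⟨0, by simp [hx], by simp [hx]⟩
    obtain ⟨V, hV, hsub, hlog⟩ := point_log.exists_isOpen_superset
      (isClosed_singleton.inter hZ.isClosed) hh
    refine ⟨V ∪ Zᶜ, (hV.union hZ.isClosed.isOpen_compl).mem_nhds ?_,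
      fun c d _ hcd => hlog.mono fun y hy => ⟨hy.1, (hcd hy.2).resolve_right (not_not.2 hy.1)⟩⟩
    by_cases hx : x ∈ Z
    · exact .inl (hsub ⟨⟨rfl, hx⟩, hx⟩)
    · exact .inr hx
  · rw [← Icc_union_Icc_eq_Icc hcd hde, inter_union_distrib_left]
    refine hc.union hd (hZ.isClosed.inter isClosed_Icc) (hZ.isClosed.inter isClosed_Icc)
      (Subsingleton.isPreconnected ?_)
    rintro y ⟨hy, hy'⟩ z ⟨hz, hz'⟩
    exact (le_antisymm hy.2.2 hy'.2.1).trans (le_antisymm hz.2.2 hz'.2.1).symm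

lemma exists_nhds_hasLogOn_strip {Y : Set ℂ} (hY : IsCompact Y) {h : ℂ → ℂ}
    (hh : ContinuousOn h Y) (h_ne : ∀ z ∈ Y, h z ≠ 0) (m : ℝ) :
    ∃ W ∈ 𝓝 m, HasLogOn h (Y ∩ Complex.re ⁻¹' W) := by
  have hS : IsCompact (Y ∩ Complex.re ⁻¹' {m}) :=
    hY.inter_right (isClosed_singleton.preimage Complex.continuous_re)
  have line_im : LeftInvOn (fun y : ℝ => (m + y * Complex.I : ℂ)) Complex.im
      (Y ∩ Complex.re ⁻¹' {m}) := by
    rintro z ⟨-, rfl⟩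
    exact Complex.re_add_im z
  have line_log : HasContinuousLogs (Y ∩ Complex.re ⁻¹' {m}) := by
    have := (hasContinuousLogs_of_isCompact_real (hS.image Complex.continuous_im)).image
      (g := fun y : ℝ => (m + y * Complex.I : ℂ)) (r := Complex.im) (by fun_prop) (by fun_prop)
      fun y _ => by simp
    rwa [line_im.image_image] at this
  obtain ⟨V, hV, hsub, hlog⟩ := (line_log (hh.mono inter_subset_left)
    fun z hz => h_ne z hz.1).exists_isOpen_superset hS.isClosed hh
  refine ⟨(Complex.re '' (Y \ V))ᶜ,
    ((hY.diff hV).image Complex.continuous_re).isClosed.isOpen_compl.mem_nhds ?_,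
    hlog.mono fun z hz => ⟨hz.1, by_contra fun hzV => hz.2 ⟨z, ⟨hz.1, hzV⟩, rfl⟩⟩⟩
  rintro ⟨z, ⟨hzY, hzV⟩, hz⟩
  exact hzV (hsub ⟨⟨hzY, hz⟩, hzY⟩)

/-- The rational function `∏ (z - p) ^ k` over the pairs `(p, k)` of `l`. -/
noncomputable def linearProd (l : List (ℂ × ℤ)) (z : ℂ) : ℂ :=
  (l.map fun p => (z - p.1) ^ p.2).prod

lemma linearProd_append (l₁ l₂ : List (ℂ × ℤ)) (z : ℂ) :
    linearProd (l₁ ++ l₂) z = linearProd l₁ z * linearProd l₂ z := by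
  simp only [linearProd, List.map_append, List.prod_append]

lemma isLogOn_linearProd {ℓ : ℂ → ℂ → ℂ} {l : List (ℂ × ℤ)} {S : Set ℂ}
    (hℓ : ∀ p ∈ l, IsLogOn (ℓ p.1) (fun z => z - p.1) S) :
    IsLogOn (fun z => (l.map fun p => p.2 * ℓ p.1 z).sum) (linearProd l) S := by
  induction l with
  | nil => exact ⟨by simpa using continuousOn_const, by simp [linearProd]⟩
  | cons p l ih =>
    rw [List.forall_mem_cons] at hℓ
    have linearProd_cons :
        EqOn (fun z => (z - p.1) ^ p.2 * linearProd l z) (linearProd (p :: l)) S :=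
      fun z _ => by simp only [linearProd, List.map_cons, List.prod_cons]
    simpa only [List.map_cons, List.sum_cons] using
      ((hℓ.1.zpow p.2).mul (ih hℓ.2)).congr linearProd_cons

/-- The branch of `log (z - p)` on the left of `p` that extends the principal branch across the
half-line above `p`. -/
noncomputable def leftLog (p z : ℂ) : ℂ :=
  Complex.log (-(z - p)) + Real.pi * Complex.I

lemma mem_slitPlane_of_re_nonneg {z : ℂ} (hz : 0 ≤ z.re) (hz0 : z ≠ 0) : z ∈ Complex.slitPlane := by
  rw [Complex.mem_slitPlane_iff]
  by_contra! h
  exact hz0 (Complex.ext (le_antisymm h.1 hz) h.2)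

lemma isLogOn_log_sub {p : ℂ} {S : Set ℂ} (hre : ∀ z ∈ S, p.re ≤ z.re) (hp : p ∉ S) :
    IsLogOn (fun z => Complex.log (z - p)) (fun z => z - p) S :=
  isLogOn_log (by fun_prop) fun z hz => mem_slitPlane_of_re_nonneg
    (by simpa using hre z hz) (sub_ne_zero.2 fun h => hp (h ▸ hz))

lemma isLogOn_leftLog {p : ℂ} {S : Set ℂ} (hre : ∀ z ∈ S, z.re ≤ p.re) (hp : p ∉ S) :
    IsLogOn (leftLog p) (fun z => z - p) S := by
  have neg_log : IsLogOn (fun z => Complex.log (-(z - p))) (fun z => -(z - p)) S :=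
    isLogOn_log (by fun_prop) fun z hz => mem_slitPlane_of_re_nonneg
      (by simpa using hre z hz) (neg_ne_zero.2 (sub_ne_zero.2 fun h => hp (h ▸ hz)))
  refine ⟨neg_log.continuousOn.add continuousOn_const, fun z hz => ?_⟩
  rw [leftLog, Complex.exp_add, neg_log.exp_eq z hz, Complex.exp_pi_mul_I, mul_neg_one, neg_neg]

lemma leftLog_sub_log {p z : ℂ} (hre : z.re = p.re) (hz : z ≠ p) :
    leftLog p z - Complex.log (z - p) =
      ((if z.im < p.im then 1 else 0 : ℤ) : ℂ) * (2 * Real.pi * Complex.I) := by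
  rw [leftLog, Complex.log, Complex.log, norm_neg]
  split_ifs with him
  · rw [Complex.arg_neg_eq_arg_add_pi_of_im_neg (by simpa using him)]
    push_cast
    ring
  · have him' : p.im < z.im := (not_lt.1 him).lt_of_ne fun h => hz (Complex.ext hre h.symm)
    rw [Complex.arg_neg_eq_arg_sub_pi_of_im_pos (by simpa using him')]
    push_cast
    ring

/-- The integer step function with, for each `(q, k)` in `l`, a jump of `-k` at `q`. -/
noncomputable def stepSum (l : List (ℝ × ℤ)) (y : ℝ) : ℤ :=
  (l.map fun q => if y < q.1 then q.2 else 0).sum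

lemma stepSum_cons (q : ℝ × ℤ) (l : List (ℝ × ℤ)) (y : ℝ) :
    stepSum (q :: l) y = (if y < q.1 then q.2 else 0) + stepSum l y := by
  simp only [stepSum, List.map_cons, List.sum_cons]

lemma stepSum_append (l₁ l₂ : List (ℝ × ℤ)) (y : ℝ) :
    stepSum (l₁ ++ l₂) y = stepSum l₁ y + stepSum l₂ y := by
  simp only [stepSum, List.map_append, List.sum_append]

lemma stepSum_eq_zero {l : List (ℝ × ℤ)} {y : ℝ} (hl : ∀ q ∈ l, q.1 ≤ y) : stepSum l y = 0 := by
  refine List.sum_eq_zero fun k hk => ?_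
  obtain ⟨q, hq, rfl⟩ := List.mem_map.1 hk
  exact if_neg (hl q hq).not_gt

lemma stepSum_eq_sum {l : List (ℝ × ℤ)} {y : ℝ} (hl : ∀ q ∈ l, y < q.1) :
    stepSum l y = (l.map Prod.snd).sum :=
  congrArg List.sum (List.map_congr_left fun q hq => if_pos (hl q hq))

lemma exists_stepSum_eq_of_Icc {Z : Set ℝ} {n : ℝ → ℤ} {a m b : ℝ} (ham : a ≤ m) (hmb : m ≤ b)
    {c₁ c₂ : ℤ} {l₁ l₂ : List (ℝ × ℤ)}
    (hl₁ : ∀ q ∈ l₁, q.1 ∈ Icc a m \ Z) (h₁ : ∀ y ∈ Z ∩ Icc a m, n y = c₁ + stepSum l₁ y)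
    (hl₂ : ∀ q ∈ l₂, q.1 ∈ Icc m b \ Z) (h₂ : ∀ y ∈ Z ∩ Icc m b, n y = c₂ + stepSum l₂ y) :
    ∃ (c : ℤ) (l : List (ℝ × ℤ)), (∀ q ∈ l, q.1 ∈ Icc a b \ Z) ∧
      ∀ y ∈ Z ∩ Icc a b, n y = c + stepSum l y := by
  classical
  have lt_of_mem : ∀ y ∈ Z, y ≤ m → ∀ q ∈ l₂, y < q.1 := fun y hy hym q hq =>
    (hym.trans (hl₂ q hq).1.1).lt_of_ne fun h => (hl₂ q hq).2 (h ▸ hy)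
  let total := (l₂.map Prod.snd).sum
  have const_eq (hm : m ∈ Z) : c₁ = c₂ + total := by
    rw [← add_zero c₁, ← stepSum_eq_zero fun q hq => (hl₁ q hq).1.2, ← h₁ m ⟨hm, ham, le_rfl⟩,
      h₂ m ⟨hm, le_rfl, hmb⟩, stepSum_eq_sum (lt_of_mem m hm le_rfl)]
  let jump : List (ℝ × ℤ) := if m ∈ Z then [] else [(m, c₁ - c₂ - total)]
  have jump_mem : ∀ q ∈ jump, q.1 = m ∧ m ∉ Z := by
    intro q hq
    by_cases hm : m ∈ Z <;> simp_all [jump]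
  have jump_left : ∀ y ∈ Z, y ≤ m → stepSum jump y = c₁ - c₂ - total := by
    intro y hy hym
    by_cases hm : m ∈ Z
    · simp [jump, hm, stepSum, const_eq hm]
    · simp [jump, hm, stepSum, hym.lt_of_ne fun h => hm (h ▸ hy)]
  refine ⟨c₂, l₁ ++ l₂ ++ jump, fun q hq => ?_, fun y ⟨hyZ, hy⟩ => ?_⟩
  · rcases List.mem_append.1 hq with hq | hq
    · rcases List.mem_append.1 hq with hq | hq
      · exact ⟨Icc_subset_Icc_right hmb (hl₁ q hq).1, (hl₁ q hq).2⟩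
      · exact ⟨Icc_subset_Icc_left ham (hl₂ q hq).1, (hl₂ q hq).2⟩
    · rw [(jump_mem q hq).1]
      exact ⟨⟨ham, hmb⟩, (jump_mem q hq).2⟩
  · rw [stepSum_append, stepSum_append]
    rcases le_total y m with hym | hmy
    · rw [h₁ y ⟨hyZ, hy.1, hym⟩, jump_left y hyZ hym, stepSum_eq_sum (lt_of_mem y hyZ hym)]
      ring
    · rw [h₂ y ⟨hyZ, hmy, hy.2⟩, stepSum_eq_zero fun q hq => (hl₁ q hq).1.2.trans hmy,
        stepSum_eq_zero (l := jump) fun q hq => (jump_mem q hq).1.trans_le hmy]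
      ring

lemma exists_stepSum_eq {Z : Set ℝ} (hZ : IsCompact Z) {n : ℝ → ℤ} (hn : ContinuousOn n Z) :
    ∃ (c : ℤ) (l : List (ℝ × ℤ)), (∀ q ∈ l, q.1 ∉ Z) ∧ ∀ y ∈ Z, n y = c + stepSum l y := by
  obtain ⟨a, b, hab, hZab⟩ := exists_subset_Icc hZ
  obtain ⟨c, l, hl, h⟩ : ∃ (c : ℤ) (l : List (ℝ × ℤ)), (∀ q ∈ l, q.1 ∈ Icc a b \ Z) ∧
      ∀ y ∈ Z ∩ Icc a b, n y = c + stepSum l y := by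
    refine Icc_induction (P := fun a b => ∃ (c : ℤ) (l : List (ℝ × ℤ)),
      (∀ q ∈ l, q.1 ∈ Icc a b \ Z) ∧ ∀ y ∈ Z ∩ Icc a b, n y = c + stepSum l y) hab
      (fun x _ => ?_) fun a m b ham hmb ⟨c₁, l₁, hl₁, h₁⟩ ⟨c₂, l₂, hl₂, h₂⟩ =>
        exists_stepSum_eq_of_Icc ham hmb hl₁ h₁ hl₂ h₂
    obtain ⟨V, hV, hconst⟩ : ∃ V ∈ 𝓝 x, ∀ y ∈ Z ∩ V, n y = n x := by
      by_cases hx : x ∈ Z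
      · obtain ⟨V, hV, hxV, hVn⟩ := mem_nhdsWithin.1 ((hn x hx) (mem_nhds_discrete.2 rfl))
        exact ⟨V, hV.mem_nhds hxV, fun y hy => (hVn hy.symm).symm⟩
      · exact ⟨Zᶜ, hZ.isClosed.isOpen_compl.mem_nhds hx, fun y hy => (hy.2 hy.1).elim⟩
    exact ⟨V, hV, fun c d _ hcd => ⟨n x, [], by simp,
      fun y hy => by simpa [stepSum] using hconst y ⟨hy.1, hcd hy.2⟩⟩⟩
  exact ⟨c, l, fun q hq => (hl q hq).2, fun y hy => h y ⟨hy, hZab hy⟩⟩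

lemma sum_leftLog_sub_sum_log {l : List (ℂ × ℤ)} {z : ℂ}
    (hl : ∀ p ∈ l, z.re = p.1.re ∧ z ≠ p.1) :
    (l.map fun p => p.2 * leftLog p.1 z).sum - (l.map fun p => p.2 * Complex.log (z - p.1)).sum =
      stepSum (l.map fun p => (p.1.im, p.2)) z.im * (2 * Real.pi * Complex.I) := by
  induction l with
  | nil => simp [stepSum]
  | cons p l ih =>
    rw [List.forall_mem_cons] at hl
    have jump := leftLog_sub_log hl.1.1 hl.1.2
    simp only [List.map_cons, List.sum_cons, stepSum_cons, Int.cast_add]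
    split_ifs at jump ⊢ <;> push_cast at jump ⊢ <;> linear_combination p.2 * jump + ih hl.2

lemma exists_jumps_eq {S : Set ℂ} (hS : IsCompact S) {m : ℝ} (hre : ∀ z ∈ S, z.re = m)
    {n : ℂ → ℤ} (hn : ContinuousOn n S) :
    ∃ (c : ℤ) (l : List (ℂ × ℤ)), (∀ p ∈ l, p.1.re = m ∧ p.1 ∉ S) ∧ ∀ z ∈ S,
      (l.map fun p => p.2 * leftLog p.1 z).sum -
        (l.map fun p => p.2 * Complex.log (z - p.1)).sum =
          (n z - c) * (2 * Real.pi * Complex.I) := by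
  let line (y : ℝ) : ℂ := ⟨m, y⟩
  have line_im : ∀ z ∈ S, line z.im = z := fun z hz => Complex.ext (hre z hz).symm rfl
  have line_continuous : Continuous line :=
    (show Continuous fun y : ℝ => (m + y * Complex.I : ℂ) by fun_prop).congr
      fun y => (Complex.mk_eq_add_mul_I m y).symm
  obtain ⟨c, l, hl, hstep⟩ := exists_stepSum_eq (n := fun y => n (line y))
    (hS.image Complex.continuous_im) (hn.comp line_continuous.continuousOn (by
      rintro _ ⟨z, hz, rfl⟩
      rwa [line_im z hz]))
  have hl_line : ∀ p ∈ l.map fun q => (line q.1, q.2), p.1.re = m ∧ p.1 ∉ S := by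
    intro p hp
    obtain ⟨q, hq, rfl⟩ := List.mem_map.1 hp
    exact ⟨rfl, fun h => hl q hq ⟨_, h, rfl⟩⟩
  refine ⟨c, l.map fun q => (line q.1, q.2), hl_line, fun z hz => ?_⟩
  rw [sum_leftLog_sub_sum_log fun p hp =>
    ⟨(hre z hz).trans (hl_line p hp).1.symm, fun h => (hl_line p hp).2 (h ▸ hz)⟩]
  have := hstep z.im ⟨z, hz, rfl⟩
  rw [line_im z hz] at this
  simp [this, Function.comp_def, line]

lemma exists_hasLogOn_div_linearProd_of_halves {Y : Set ℂ} (hY : IsCompact Y) {h : ℂ → ℂ} {m : ℝ}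
    (h₁ : HasLogOn h (Y ∩ Complex.re ⁻¹' Iic m)) (h₂ : HasLogOn h (Y ∩ Complex.re ⁻¹' Ici m)) :
    ∃ l : List (ℂ × ℤ), (∀ p ∈ l, p.1.re = m ∧ p.1 ∉ Y) ∧
      HasLogOn (fun z => h z / linearProd l z) Y := by
  have left_closed := hY.isClosed.inter (isClosed_Iic.preimage Complex.continuous_re (t := Iic m))
  have right_closed := hY.isClosed.inter (isClosed_Ici.preimage Complex.continuous_re (t := Ici m))
  have union_eq : Y ∩ Complex.re ⁻¹' Iic m ∪ Y ∩ Complex.re ⁻¹' Ici m = Y := by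
    rw [← inter_union_distrib_left, ← preimage_union, Iic_union_Ici, preimage_univ, inter_univ]
  obtain ⟨M₁, hM₁⟩ := h₁
  obtain ⟨M₂, hM₂⟩ := h₂
  obtain ⟨n, hn, hsub⟩ := (hM₁.mono inter_subset_left).exists_int_sub (hM₂.mono inter_subset_right)
  obtain ⟨c, l, hl, hjump⟩ := exists_jumps_eq (m := m)
    ((hY.of_isClosed_subset left_closed inter_subset_left).inter_right right_closed)
    (fun z hz => le_antisymm hz.1.2 hz.2.2) hn
  have hlY : ∀ p ∈ l, p.1 ∉ Y := fun p hp hpY =>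
    (hl p hp).2 ⟨⟨hpY, (hl p hp).1.le⟩, ⟨hpY, (hl p hp).1.ge⟩⟩
  have log₁ := hM₁.mul (isLogOn_linearProd (ℓ := leftLog) fun p hp => isLogOn_leftLog
    (fun z hz => hz.2.trans_eq (hl p hp).1.symm) fun hpY => hlY p hp hpY.1).inv
  have log₂ := (hM₂.add_int_mul c).mul (isLogOn_linearProd (ℓ := fun p z => Complex.log (z - p))
    fun p hp => isLogOn_log_sub (fun z hz => (hl p hp).1.trans_le hz.2)
      fun hpY => hlY p hp hpY.1).inv
  refine ⟨l, fun p hp => ⟨(hl p hp).1, hlY p hp⟩, ?_⟩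
  simp only [div_eq_mul_inv]
  rw [← union_eq]
  exact log₁.union log₂ left_closed right_closed fun z hz => by
    linear_combination hsub z hz - hjump z hz

lemma exists_hasLogOn_div_linearProd_union {Y : Set ℂ} (hY : IsCompact Y) {h : ℂ → ℂ}
    {a m b : ℝ} (ham : a ≤ m) (hmb : m ≤ b) {l₁ l₂ : List (ℂ × ℤ)}
    (hl₁ : ∀ p ∈ l₁, p.1 ∉ Y ∧ p.1.re ∈ Icc a m)
    (h₁ : HasLogOn (fun z => h z / linearProd l₁ z) (Y ∩ Complex.re ⁻¹' Icc a m))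
    (hl₂ : ∀ p ∈ l₂, p.1 ∉ Y ∧ p.1.re ∈ Icc m b)
    (h₂ : HasLogOn (fun z => h z / linearProd l₂ z) (Y ∩ Complex.re ⁻¹' Icc m b)) :
    ∃ l : List (ℂ × ℤ), (∀ p ∈ l, p.1 ∉ Y ∧ p.1.re ∈ Icc a b) ∧
      HasLogOn (fun z => h z / linearProd l z) (Y ∩ Complex.re ⁻¹' Icc a b) := by
  have left_log : HasLogOn (fun z => h z / linearProd (l₁ ++ l₂) z)
      (Y ∩ Complex.re ⁻¹' Icc a m) :=
    (h₁.div ⟨_, isLogOn_linearProd (ℓ := leftLog) fun p hp => isLogOn_leftLog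
      (fun z hz => hz.2.2.trans (hl₂ p hp).2.1) fun hpY => (hl₂ p hp).1 hpY.1⟩).congr
        fun z _ => by simp only [linearProd_append, div_div]
  have right_log : HasLogOn (fun z => h z / linearProd (l₁ ++ l₂) z)
      (Y ∩ Complex.re ⁻¹' Icc m b) :=
    (h₂.div ⟨_, isLogOn_linearProd (ℓ := fun p z => Complex.log (z - p)) fun p hp =>
      isLogOn_log_sub (fun z hz => (hl₁ p hp).2.2.trans hz.2.1)
        fun hpY => (hl₁ p hp).1 hpY.1⟩).congr
        fun z _ => by simp only [linearProd_append, div_div, mul_comm]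
  obtain ⟨l, hl, hlog⟩ := exists_hasLogOn_div_linearProd_of_halves
    (hY.inter_right (isClosed_Icc.preimage Complex.continuous_re (t := Icc a b)))
    (left_log.mono fun z hz => ⟨hz.1.1, hz.1.2.1, hz.2⟩)
    (right_log.mono fun z hz => ⟨hz.1.1, hz.2, hz.1.2.2⟩)
  refine ⟨l₁ ++ l₂ ++ l, ?_, hlog.congr fun z _ => by
    simp only [linearProd_append _ l, div_div]⟩
  simp only [List.mem_append]
  rintro p ((hp | hp) | hp)
  · exact (hl₁ p hp).imp_right fun h => Icc_subset_Icc_right hmb h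
  · exact (hl₂ p hp).imp_right fun h => Icc_subset_Icc_left ham h
  · have hre : p.1.re ∈ Icc a b := (hl p hp).1 ▸ ⟨ham, hmb⟩
    exact ⟨fun hpY => (hl p hp).2 ⟨hpY, hre⟩, hre⟩

lemma exists_hasLogOn_div_linearProd {Y : Set ℂ} (hY : IsCompact Y) {h : ℂ → ℂ}
    (hh : ContinuousOn h Y) (h_ne : ∀ z ∈ Y, h z ≠ 0) :
    ∃ l : List (ℂ × ℤ), (∀ p ∈ l, p.1 ∉ Y) ∧ HasLogOn (fun z => h z / linearProd l z) Y := by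
  obtain ⟨a, b, hab, hYab⟩ := exists_subset_Icc (hY.image Complex.continuous_re)
  obtain ⟨l, hl, hlog⟩ : ∃ l : List (ℂ × ℤ), (∀ p ∈ l, p.1 ∉ Y ∧ p.1.re ∈ Icc a b) ∧
      HasLogOn (fun z => h z / linearProd l z) (Y ∩ Complex.re ⁻¹' Icc a b) := by
    refine Icc_induction (P := fun a b => ∃ l : List (ℂ × ℤ),
      (∀ p ∈ l, p.1 ∉ Y ∧ p.1.re ∈ Icc a b) ∧
        HasLogOn (fun z => h z / linearProd l z) (Y ∩ Complex.re ⁻¹' Icc a b)) hab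
      (fun x _ => ?_) fun c d e hcd hde ⟨l₁, hl₁, h₁⟩ ⟨l₂, hl₂, h₂⟩ =>
        exists_hasLogOn_div_linearProd_union hY hcd hde hl₁ h₁ hl₂ h₂
    obtain ⟨W, hW, hlog⟩ := exists_nhds_hasLogOn_strip hY hh h_ne x
    exact ⟨W, hW, fun c d _ hcd => ⟨[], by simp, by
      simpa [linearProd] using hlog.mono (inter_subset_inter_right Y (preimage_mono hcd))⟩⟩
  exact ⟨l, fun p hp => (hl p hp).1, hlog.mono fun z hz => ⟨hz, hYab ⟨z, hz, rfl⟩⟩⟩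

/-! ### The logarithmic hull and the fill of a compact plane set -/

/-- The points `c` for which `z - c` has no continuous logarithm on `S`. For compact `S` this is
`S` together with the bounded components of its complement. -/
def logHull (S : Set ℂ) : Set ℂ :=
  {c | ¬ HasLogOn (fun z => z - c) S}

lemma subset_logHull (S : Set ℂ) : S ⊆ logHull S :=
  fun c hc hlog => hlog.ne_zero hc (sub_self c)

lemma hasLogOn_sub_of_dist_lt {S : Set ℂ} {c c' : ℂ} (hc : HasLogOn (fun z => z - c) S)
    (hdist : ∀ z ∈ S, dist c c' < dist z c) : HasLogOn (fun z => z - c') S := by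
  have sub_ne : ∀ z ∈ S, z - c ≠ 0 := fun z hz => hc.ne_zero hz
  have ratio_log : HasLogOn (fun z => 1 + (c - c') / (z - c)) S := by
    refine ⟨_, isLogOn_log ?_ fun z hz => Complex.mem_slitPlane_of_norm_lt_one ?_⟩
    · exact continuousOn_const.add (continuousOn_const.div (by fun_prop) sub_ne)
    · rw [norm_div, div_lt_one (norm_pos_iff.2 (sub_ne z hz)), ← dist_eq_norm, ← dist_eq_norm]
      exact hdist z hz
  refine (hc.mul ratio_log).congr fun z hz => ?_
  have := sub_ne z hz
  field_simp
  ring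

lemma eventually_hasLogOn_sub_iff {S : Set ℂ} (hS : IsClosed S) {c : ℂ} (hc : c ∉ S) :
    ∀ᶠ c' in 𝓝 c, HasLogOn (fun z => z - c') S ↔ HasLogOn (fun z => z - c) S := by
  obtain ⟨ε, hε, hball⟩ := Metric.isOpen_iff.1 hS.isOpen_compl c hc
  have le_dist : ∀ z ∈ S, ε ≤ dist z c := fun z hz => not_lt.1 fun h => hball h hz
  filter_upwards [ball_mem_nhds c (half_pos hε)] with c' hc'
  rw [mem_ball] at hc'
  refine ⟨fun h => hasLogOn_sub_of_dist_lt h fun z hz => ?_,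
    fun h => hasLogOn_sub_of_dist_lt h fun z hz => ?_⟩
  · linarith [le_dist z hz, dist_triangle z c' c]
  · linarith [le_dist z hz, dist_comm c c']

lemma isClosed_logHull {S : Set ℂ} (hS : IsClosed S) : IsClosed (logHull S) := by
  rw [← isOpen_compl_iff, isOpen_iff_mem_nhds]
  intro c hc
  filter_upwards [eventually_hasLogOn_sub_iff hS fun h => hc (subset_logHull S h)] with c' hc'
  exact not_not.2 (hc'.2 (not_not.1 hc))

lemma logHull_subset_of_convex {S B : Set ℂ} (hB : Convex ℝ B) (hSB : S ⊆ B) : logHull S ⊆ B := by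
  intro c hc
  by_contra hcB
  have sub_ne : ∀ z ∈ B, z - c ≠ 0 := fun z hz => sub_ne_zero.2 fun h => hcB (h ▸ hz)
  exact hc ((hasContinuousLogs_of_convex hB (by fun_prop) sub_ne).mono hSB)

lemma isCompact_logHull {S : Set ℂ} (hS : IsCompact S) : IsCompact (logHull S) := by
  obtain ⟨r, hr⟩ := hS.isBounded.subset_closedBall 0
  exact (isCompact_closedBall 0 r).of_isClosed_subset (isClosed_logHull hS.isClosed)
    (logHull_subset_of_convex (convex_closedBall 0 r) hr)

lemma hasLogOn_of_continuousOn_logHull {S : Set ℂ} (hS : IsCompact S) {h : ℂ → ℂ}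
    (hh : ContinuousOn h (logHull S)) (h_ne : ∀ z ∈ logHull S, h z ≠ 0) : HasLogOn h S := by
  obtain ⟨l, hl, hlog⟩ := exists_hasLogOn_div_linearProd (isCompact_logHull hS) hh h_ne
  have factor_log : ∀ p ∈ l, HasLogOn (fun z => z - p.1) S := fun p hp => not_not.1 (hl p hp)
  choose! ℓ hℓ using fun p (hp : HasLogOn (fun z => z - p) S) => hp
  have prod_log : IsLogOn _ (linearProd l) S :=
    isLogOn_linearProd fun p hp => hℓ p.1 (factor_log p hp)
  refine ((hlog.mono (subset_logHull S)).mul ⟨_, prod_log⟩).congr fun z hz => ?_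
  exact div_mul_cancel₀ _ (prod_log.exp_eq z hz ▸ Complex.exp_ne_zero _)

lemma hasContinuousLogs_of_logHull_subset {X : Set ℂ} (hX : IsCompact X) (hhull : logHull X ⊆ X) :
    HasContinuousLogs X := fun _ hh h_ne =>
  hasLogOn_of_continuousOn_logHull hX (hh.mono hhull) fun z hz => h_ne z (hhull hz)

lemma disjoint_logHull_of_not_isBounded {S C : Set ℂ} (hS : IsCompact S) (hC : IsPreconnected C)
    (hCS : Disjoint C S) (hunbdd : ¬ Bornology.IsBounded C) : Disjoint C (logHull S) := by
  obtain ⟨r, hr⟩ := (isCompact_logHull hS).isBounded.subset_closedBall 0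
  obtain ⟨c', hc', hfar⟩ : ∃ c' ∈ C, c' ∉ closedBall 0 r :=
    not_subset.1 fun h => hunbdd (isBounded_closedBall.subset h)
  rw [Set.disjoint_left]
  intro c hc
  have log_iff : HasLogOn (fun z => z - c) S ↔ HasLogOn (fun z => z - c') S :=
    hC.induction₂ (fun c c' => HasLogOn (fun z => z - c) S ↔ HasLogOn (fun z => z - c') S)
      (fun x hx => ((eventually_hasLogOn_sub_iff hS.isClosed
        (Set.disjoint_left.1 hCS hx)).filter_mono nhdsWithin_le_nhds).mono fun _ => Iff.symm)
      (fun _ _ _ _ _ _ => Iff.trans) (fun _ _ _ _ => Iff.symm) hc hc'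
  exact not_not.2 (log_iff.2 (not_not.1 fun h => hfar (hr h)))

lemma notMem_Fill_iff {A : Set ℂ} {c : ℂ} :
    c ∉ Fill A ↔ c ∉ A ∧ ¬ Bornology.IsBounded (connectedComponentIn Aᶜ c) := by
  simp only [Fill, mem_union, mem_ofPred_eq, not_or, not_and]
  exact and_congr_right fun h => ⟨fun h' => h' h, fun h' _ => h'⟩

lemma disjoint_connectedComponentIn_Fill {A : Set ℂ} {c : ℂ} (hc : c ∉ Fill A) :
    Disjoint (connectedComponentIn Aᶜ c) (Fill A) :=
  Set.disjoint_left.2 fun _ hy => notMem_Fill_iff.2 ⟨connectedComponentIn_subset _ _ hy,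
    connectedComponentIn_eq hy ▸ (notMem_Fill_iff.1 hc).2⟩

lemma Fill_mono {A B : Set ℂ} (hAB : A ⊆ B) : Fill A ⊆ Fill B := by
  intro z hz
  by_contra hzB
  obtain ⟨hB, hunbdd⟩ := notMem_Fill_iff.1 hzB
  refine notMem_Fill_iff.2 ⟨fun h => hB (hAB h), fun hbdd => hunbdd (hbdd.subset ?_)⟩ hz
  exact connectedComponentIn_mono z (compl_subset_compl.2 hAB)

lemma isClosed_Fill {A : Set ℂ} (hA : IsClosed A) : IsClosed (Fill A) := by
  rw [← isOpen_compl_iff, isOpen_iff_mem_nhds]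
  intro c hc
  filter_upwards [hA.isOpen_compl.connectedComponentIn.mem_nhds
    (mem_connectedComponentIn (notMem_Fill_iff.1 hc).1)] with y hy
  exact Set.disjoint_left.1 (disjoint_connectedComponentIn_Fill hc) hy

lemma Fill_subset_ball {A : Set ℂ} {r : ℝ} (hr : 0 < r) (hA : A ⊆ ball 0 r) :
    Fill A ⊆ ball 0 r := by
  intro c hc
  by_contra hcr
  have hcr : r ≤ ‖c‖ := by simpa using hcr
  let ray : Set ℂ := (fun t : ℝ => t • c) '' Ici 1
  have c_mem_ray : c ∈ ray := ⟨1, self_mem_Ici, one_smul ℝ c⟩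
  have ray_subset : ray ⊆ connectedComponentIn Aᶜ c := by
    refine (isPreconnected_Ici.image _ (by fun_prop)).subset_connectedComponentIn c_mem_ray ?_
    rintro _ ⟨t, ht, rfl⟩ htA
    have := hA htA
    rw [mem_ball_zero_iff, norm_smul, Real.norm_of_nonneg (zero_le_one.trans ht)] at this
    nlinarith [mem_Ici.1 ht]
  refine notMem_Fill_iff.2 ⟨connectedComponentIn_subset _ _ (ray_subset c_mem_ray),
    fun hbdd => ?_⟩ hc
  obtain ⟨R, hR⟩ := (hbdd.subset ray_subset).exists_norm_le
  have := hR _ ⟨max 1 ((R + 1) / ‖c‖), mem_Ici.2 (le_max_left _ _), rfl⟩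
  rw [norm_smul, Real.norm_of_nonneg (by positivity)] at this
  have := (div_le_iff₀ (hr.trans_le hcr)).1 (le_max_right 1 ((R + 1) / ‖c‖))
  linarith

lemma isCompact_Fill {A : Set ℂ} (hA : IsCompact A) : IsCompact (Fill A) := by
  obtain ⟨r, hr, hAr⟩ := hA.isBounded.subset_ball_lt 0 0
  exact isCompact_of_isClosed_isBounded (isClosed_Fill hA.isClosed)
    (isBounded_ball.subset (Fill_subset_ball hr hAr))

lemma hasContinuousLogs_Fill {A : Set ℂ} (hA : IsCompact A) : HasContinuousLogs (Fill A) := by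
  refine hasContinuousLogs_of_logHull_subset (isCompact_Fill hA) fun c hc => ?_
  by_contra hcA
  obtain ⟨hc', hunbdd⟩ := notMem_Fill_iff.1 hcA
  exact Set.disjoint_left.1 (disjoint_logHull_of_not_isBounded (isCompact_Fill hA)
    isPreconnected_connectedComponentIn (disjoint_connectedComponentIn_Fill hcA) hunbdd)
      (mem_connectedComponentIn hc') hc

/-! ### The displacement along a simple loop of a translation line -/

section Index

/-- An isotopy from the identity; only injectivity of the maps `H (t, ·)` is recorded. -/
structure IsIsotopyFromId {E : Type*} [TopologicalSpace E] (H : ℝ × E → E) : Prop where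
  continuous : Continuous H
  injective : ∀ t, Function.Injective fun z => H (t, z)
  map_zero : ∀ z, H (0, z) = z

/-- A parametrized line on which `g` acts as the unit translation of the parameter and which has no
self-intersections between parameters at distance at most one. -/
structure IsTranslationLine {E : Type*} [TopologicalSpace E] (g : E → E) (β : ℝ → E) : Prop where
  continuous : Continuous β
  map_eq : ∀ u, g (β u) = β (u + 1)
  ne : ∀ u v, u < v → v ≤ u + 1 → β u ≠ β v

/-- The pairs `(u, v)` with `a ≤ u`, `v ≤ b` and `v - u ∈ I`, which parametrize the chords of a
curve on `[a, b]`. -/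
def chordRegion (a b : ℝ) (I : Set ℝ) : Set (ℝ × ℝ) :=
  {p | a ≤ p.1 ∧ p.2 ≤ b ∧ p.2 - p.1 ∈ I}

/-- `β` restricts to a simple closed curve on `[a, b]`. -/
structure IsSimpleLoopOn {E : Type*} (β : ℝ → E) (a b : ℝ) : Prop where
  closed : β a = β b
  ne : ∀ p ∈ chordRegion a b (Ioo 0 (b - a)), β p.1 ≠ β p.2

lemma convex_chordRegion (a b : ℝ) {I : Set ℝ} (hI : Convex ℝ I) :
    Convex ℝ (chordRegion a b I) :=
  ((convex_Ici a).linear_preimage (LinearMap.fst ℝ ℝ ℝ)).inter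
    (((convex_Iic b).linear_preimage (LinearMap.snd ℝ ℝ ℝ)).inter
      (hI.linear_preimage (LinearMap.snd ℝ ℝ ℝ - LinearMap.fst ℝ ℝ ℝ)))

lemma IsSimpleLoopOn.comp {E F : Type*} {β : ℝ → E} {a b : ℝ} (hβ : IsSimpleLoopOn β a b)
    {g : E → F} (hg : Function.Injective g) : IsSimpleLoopOn (fun u => g (β u)) a b :=
  ⟨congrArg g hβ.closed, fun p hp => hg.ne (hβ.ne p hp)⟩

-- As `u` runs through the loop, the chord from `γ (t, a)` to `γ (t, u)` makes a half turn.
lemma exists_isLogOn_chord_half_turn {γ : ℝ × ℝ → ℂ} (hγ : Continuous γ) {a b : ℝ} (hab : a < b)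
    (hloop : ∀ t, IsSimpleLoopOn (fun u => γ (t, u)) a b) :
    ∃ (Λ : ℝ × ℝ × ℝ → ℂ) (q : ℂ), Complex.exp q = -1 ∧
      IsLogOn Λ (fun p => γ (p.1, p.2.2) - γ (p.1, p.2.1))
        (Icc 0 1 ×ˢ chordRegion a b (Ioo 0 (b - a))) ∧
      ∀ t ∈ Icc (0 : ℝ) 1, ∀ u ∈ Ioo a b, Λ (t, u, b) = Λ (t, a, u) + q := by
  obtain ⟨Λ, hΛ⟩ := hasContinuousLogs_of_convex
    ((convex_Icc (0 : ℝ) 1).prod (convex_chordRegion a b (convex_Ioo 0 (b - a))))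
    (h := fun p => γ (p.1, p.2.2) - γ (p.1, p.2.1)) (by fun_prop)
    (fun p hp => sub_ne_zero.2 ((hloop p.1).ne p.2 hp.2).symm)
  have to_end : MapsTo (fun x : ℝ × ℝ => (x.1, x.2, b)) (Icc 0 1 ×ˢ Ioo a b)
      (Icc 0 1 ×ˢ chordRegion a b (Ioo 0 (b - a))) := fun x ⟨ht, ha, hb⟩ =>
    ⟨ht, ha.le, le_rfl, sub_pos.2 hb, sub_lt_sub_left ha b⟩
  have from_start : MapsTo (fun x : ℝ × ℝ => (x.1, a, x.2)) (Icc 0 1 ×ˢ Ioo a b)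
      (Icc 0 1 ×ˢ chordRegion a b (Ioo 0 (b - a))) := fun x ⟨ht, ha, hb⟩ =>
    ⟨ht, le_rfl, hb.le, sub_pos.2 ha, sub_lt_sub_right hb a⟩
  have log_start := hΛ.comp (by fun_prop) from_start
  have log_opposite : IsLogOn (fun x : ℝ × ℝ => Λ (x.1, x.2, b) + Real.pi * Complex.I)
      (fun x => γ (x.1, x.2) - γ (x.1, a)) (Icc 0 1 ×ˢ Ioo a b) := by
    refine ⟨(hΛ.comp (by fun_prop) to_end).continuousOn.add continuousOn_const, fun x hx => ?_⟩
    rw [Complex.exp_add, Complex.exp_pi_mul_I, hΛ.exp_eq _ (to_end hx), (hloop x.1).closed]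
    ring
  have preconnected : IsPreconnected (Icc (0 : ℝ) 1 ×ˢ Ioo a b) :=
    ((convex_Icc _ _).prod (convex_Ioo _ _)).isPreconnected
  obtain ⟨c, hc⟩ := exists_between hab
  refine ⟨Λ, Λ (0, c, b) - Λ (0, a, c), ?_, hΛ, fun t ht u hu => ?_⟩
  · have mem : ((0 : ℝ), c) ∈ Icc (0 : ℝ) 1 ×ˢ Ioo a b := ⟨unitInterval.zero_mem, hc⟩
    have exp_eq := log_opposite.exp_eq _ mem
    rw [Complex.exp_add, Complex.exp_pi_mul_I, ← log_start.exp_eq _ mem] at exp_eq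
    rw [Complex.exp_sub, div_eq_iff (Complex.exp_ne_zero _)]
    linear_combination -exp_eq
  · have const := log_opposite.sub_eq_sub log_start preconnected
      (x := (t, u)) (y := (0, c)) ⟨ht, hu⟩ ⟨unitInterval.zero_mem, hc⟩
    linear_combination const

-- The chord `(u, u + 1)` from `u = a` to `u = b` is deformed through `(a, a + 1)`, `(a + 1, b)` and
-- `(b, b + 1)`, and each of the two passages contributes a half turn.
lemma chord_log_sub_eq {β : ℝ → ℂ} {a b : ℝ} (hab : a + 1 < b) {q : ℂ} {L L' A : ℝ × ℝ → ℂ}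
    (hL : IsLogOn L (fun p => β p.2 - β p.1) (chordRegion a b (Ioo 0 (b - a))))
    (hLq : ∀ u ∈ Ioo a b, L (u, b) = L (a, u) + q)
    (hL' : IsLogOn L' (fun p => β p.2 - β p.1) (chordRegion (a + 1) (b + 1) (Ioo 0 (b - a))))
    (hLq' : ∀ u ∈ Ioo (a + 1) (b + 1), L' (u, b + 1) = L' (a + 1, u) + q)
    (hA : IsLogOn A (fun p => β p.2 - β p.1) (chordRegion a (b + 1) (Ioc 0 1))) :
    A (b, b + 1) - A (a, a + 1) = 2 * q := by
  have convex := convex_chordRegion a b (convex_Ioo 0 (b - a))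
  have convex' := convex_chordRegion (a + 1) (b + 1) (convex_Ioo 0 (b - a))
  have convexA := convex_chordRegion a (b + 1) (convex_Ioc (0 : ℝ) 1)
  obtain ⟨c, hac, hcb, hca⟩ : ∃ c, a + 1 < c ∧ c ≤ b ∧ c ≤ a + 1 + 1 :=
    ⟨min b (a + 1 + 1), lt_min hab (lt_add_one _), min_le_left _ _, min_le_right _ _⟩
  have memL : (a + 1, c) ∈ chordRegion a b (Ioo 0 (b - a)) := by
    simp only [chordRegion, mem_ofPred_eq, mem_Ioo]; grind
  have memL' : (a + 1, c) ∈ chordRegion (a + 1) (b + 1) (Ioo 0 (b - a)) := by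
    simp only [chordRegion, mem_ofPred_eq, mem_Ioo]; grind
  have memA : (a + 1, c) ∈ chordRegion a (b + 1) (Ioc 0 1) := by
    simp only [chordRegion, mem_ofPred_eq, mem_Ioc]; grind
  have start := (hA.mono inter_subset_right).sub_eq_sub (hL.mono inter_subset_left)
    (convex.inter convexA).isPreconnected (x := (a, a + 1)) (y := (a + 1, c))
    (by simp only [chordRegion, mem_inter_iff, mem_ofPred_eq, mem_Ioo, mem_Ioc]; grind)
    ⟨memL, memA⟩
  have middle := (hL.mono inter_subset_left).sub_eq_sub (hL'.mono inter_subset_right)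
    (convex.inter convex').isPreconnected (x := (a + 1, b)) (y := (a + 1, c))
    (by simp only [chordRegion, mem_inter_iff, mem_ofPred_eq, mem_Ioo]; grind)
    ⟨memL, memL'⟩
  have finish := (hA.mono inter_subset_right).sub_eq_sub (hL'.mono inter_subset_left)
    (convex'.inter convexA).isPreconnected (x := (b, b + 1)) (y := (a + 1, c))
    (by simp only [chordRegion, mem_inter_iff, mem_ofPred_eq, mem_Ioo, mem_Ioc]; grind)
    ⟨memL', memA⟩
  have half := hLq (a + 1) ⟨lt_add_one a, hab⟩
  have half' := hLq' b ⟨hab, lt_add_one b⟩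
  linear_combination finish - start - middle + half + half'

variable {H : ℝ × ℂ → ℂ} {β : ℝ → ℂ} {a b : ℝ}

lemma IsTranslationLine.log_displacement_ne (hβ : IsTranslationLine (fun z => H (1, z)) β)
    (hH : IsIsotopyFromId H) (hab : a + 1 < b) (hloop : IsSimpleLoopOn β a b) {V : ℝ → ℂ}
    (hV : IsLogOn V (fun u => β (u + 1) - β u) (Icc a b)) : V b ≠ V a := by
  have hHc := hH.continuous
  have hβc := hβ.continuous
  obtain ⟨Λ, q, hq, hΛ, hΛq⟩ := exists_isLogOn_chord_half_turn (γ := fun p => H (p.1, β p.2))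
    (by fun_prop) (by linarith) fun t => hloop.comp (hH.injective t)
  obtain ⟨A, hA⟩ := hasContinuousLogs_of_convex
    (convex_chordRegion a (b + 1) (convex_Ioc (0 : ℝ) 1)) (h := fun p => β p.2 - β p.1)
    (by fun_prop) fun p hp => sub_ne_zero.2
      (hβ.ne _ _ (sub_pos.1 hp.2.2.1) (by linarith [hp.2.2.2])).symm
  have log_zero : IsLogOn (fun p => Λ (0, p)) (fun p => β p.2 - β p.1)
      (chordRegion a b (Ioo 0 (b - a))) :=
    (hΛ.comp (by fun_prop) fun p hp => ⟨unitInterval.zero_mem, hp⟩).congr fun p _ => by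
      simp only [hH.map_zero]
  have log_one : IsLogOn (fun p => Λ (1, p.1 - 1, p.2 - 1)) (fun p => β p.2 - β p.1)
      (chordRegion (a + 1) (b + 1) (Ioo 0 (b - a))) := by
    have shift : MapsTo (fun p : ℝ × ℝ => ((1 : ℝ), p.1 - 1, p.2 - 1))
        (chordRegion (a + 1) (b + 1) (Ioo 0 (b - a)))
        (Icc 0 1 ×ˢ chordRegion a b (Ioo 0 (b - a))) := fun p ⟨ha, hb, hp⟩ =>
      ⟨unitInterval.one_mem, le_sub_iff_add_le.2 ha, sub_le_iff_le_add.2 hb, by simpa using hp⟩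
    exact (hΛ.comp (by fun_prop) shift).congr fun p _ => by
      simp only [hβ.map_eq, sub_add_cancel]
  have half_turns := chord_log_sub_eq hab log_zero (hΛq 0 unitInterval.zero_mem) log_one
    (fun u hu => by
      simpa using hΛq 1 unitInterval.one_mem (u - 1) ⟨by linarith [hu.1], by linarith [hu.2]⟩) hA
  have unit_chords : MapsTo (fun u : ℝ => (u, u + 1)) (Icc a b) (chordRegion a (b + 1) (Ioc 0 1)) :=
    fun u hu => ⟨hu.1, add_le_add_left hu.2 1, by norm_num⟩
  have advance := hV.sub_eq_sub (hA.comp (by fun_prop) unit_chords) isPreconnected_Icc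
    (left_mem_Icc.2 (by linarith)) (right_mem_Icc.2 (by linarith))
  have hq_ne : q ≠ 0 := by
    rintro rfl
    norm_num at hq
  intro heq
  exact hq_ne (by linear_combination (1 / 2 : ℂ) * (heq + advance - half_turns))

lemma IsTranslationLine.exists_fixedPt_mem_logHull
    (hβ : IsTranslationLine (fun z => H (1, z)) β) (hH : IsIsotopyFromId H) (hab : a + 1 < b)
    (hloop : IsSimpleLoopOn β a b) : ∃ p ∈ logHull (β '' Icc a b), H (1, p) = p := by
  by_contra! fixed_point_free
  have hHc := hH.continuous
  obtain ⟨L, hL⟩ := hasLogOn_of_continuousOn_logHull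
    (isCompact_Icc.image_of_continuousOn hβ.continuous.continuousOn)
    (h := fun z => H (1, z) - z) (by fun_prop)
    (fun z hz => sub_ne_zero.2 (fixed_point_free z hz))
  refine hβ.log_displacement_ne hH hab hloop (V := fun u => L (β u)) ?_
    (congrArg L hloop.closed.symm)
  exact (hL.comp hβ.continuous.continuousOn (mapsTo_image _ _)).congr fun u _ => by
    simp only [hβ.map_eq]

end Index

/-! ### Lifting to the universal cover of the complement of a fixed point -/

section Lift

variable {H H' : ℝ × ℂ → ℂ} {β β' : ℝ → ℂ} {p : ℂ}

lemma IsTranslationLine.apply_ne_of_isFixedPt {E : Type*} [TopologicalSpace E] {g : E → E}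
    {β : ℝ → E} (hβ : IsTranslationLine g β) {p : E} (hp : g p = p) (u : ℝ) : β u ≠ p := by
  rintro rfl
  exact hβ.ne u (u + 1) (lt_add_one u) le_rfl (hp.symm.trans (hβ.map_eq u))

lemma IsIsotopyFromId.add_smul {H : ℝ × ℂ → ℂ} (hH : IsIsotopyFromId H) (w : ℂ) :
    IsIsotopyFromId fun x => H x + x.1 * w := by
  have hHc := hH.continuous
  refine ⟨by fun_prop, fun t _ _ h => hH.injective t (add_right_cancel h), fun z => ?_⟩
  simp [hH.map_zero]

lemma IsIsotopyFromId.exists_lift (hH : IsIsotopyFromId H) (hp : H (1, p) = p) :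
    ∃ G, IsIsotopyFromId G ∧
      ∀ ζ, Complex.exp (G (1, ζ)) = H (1, p + Complex.exp ζ) - p := by
  have hHc := hH.continuous
  obtain ⟨G, hG, hG₀⟩ := HasLogOn.exists_apply_eq (w := 0)
    (f := fun x : ℝ × ℂ => H (x.1, p + Complex.exp x.2) - H (x.1, p))
    (hasContinuousLogs_of_convex convex_univ (by fun_prop) fun x _ =>
      sub_ne_zero.2 ((hH.injective x.1).ne (by simp))) (mem_univ (0, 0)) (by simp [hH.map_zero])
  have hGc : Continuous G := continuousOn_univ.1 hG.continuousOn
  have exp_eq (x : ℝ × ℂ) : Complex.exp (G x) = _ := hG.exp_eq x (mem_univ x)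
  have map_zero (ζ : ℂ) : G (0, ζ) = ζ :=
    IsLogOn.eqOn (f := Complex.exp) (L₁ := fun ζ => G (0, ζ)) (L₂ := id)
      ⟨by fun_prop, fun z _ => by simp [exp_eq, hH.map_zero]⟩
      ⟨continuousOn_id, fun _ _ => rfl⟩ isPreconnected_univ (mem_univ 0) hG₀ (mem_univ ζ)
  have equivariant (k : ℤ) (t : ℝ) (ζ : ℂ) : G (t, ζ + k * (2 * Real.pi * Complex.I)) =
      G (t, ζ) + k * (2 * Real.pi * Complex.I) := by
    refine IsLogOn.eqOn (f := fun s => H (s, p + Complex.exp ζ) - H (s, p))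
      (L₁ := fun s => G (s, ζ + k * (2 * Real.pi * Complex.I)))
      ⟨by fun_prop, fun s _ => ?_⟩
      (IsLogOn.add_int_mul ⟨by fun_prop, fun s _ => exp_eq (s, ζ)⟩ k)
      isPreconnected_univ (mem_univ 0) (by simp only [map_zero]) (mem_univ t)
    simp only [exp_eq, Complex.exp_add, Complex.exp_int_mul_two_pi_mul_I, mul_one]
  refine ⟨G, ⟨hGc, fun t ζ ζ' h => ?_, map_zero⟩, fun ζ => by rw [exp_eq, hp]⟩
  have exp_inj : H (t, p + Complex.exp ζ) = H (t, p + Complex.exp ζ') :=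
    sub_left_injective ((exp_eq (t, ζ)).symm.trans ((congrArg _ h).trans (exp_eq (t, ζ'))))
  obtain ⟨k, rfl⟩ :=
    Complex.exp_eq_exp_iff_exists_int.1 (add_right_injective p (hH.injective t exp_inj))
  simp only [equivariant] at h
  rw [add_eq_left.1 h, add_zero]

/-- The isotopy `H'` and the line `β'` lift the end map of `H` and the line `β` under the universal
covering `ζ ↦ p + exp ζ` of `ℂ \ {p}`. -/
structure IsLogLift (p : ℂ) (H H' : ℝ × ℂ → ℂ) (β β' : ℝ → ℂ) : Prop where
  isotopy : IsIsotopyFromId H'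
  line : IsTranslationLine (fun z => H' (1, z)) β'
  exp_map : ∀ ζ, Complex.exp (H' (1, ζ)) = H (1, p + Complex.exp ζ) - p
  exp_line : ∀ u, Complex.exp (β' u) = β u - p

-- The lift of the isotopy is corrected by an isotopy of translations, so that its end map
-- translates the lifted line.
lemma IsTranslationLine.exists_isLogLift (hβ : IsTranslationLine (fun z => H (1, z)) β)
    (hH : IsIsotopyFromId H) (hp : H (1, p) = p) {ω : ℂ} (hω : Complex.exp ω = β 0 - p) :
    ∃ H' β', IsLogLift p H H' β β' ∧ β' 0 = ω := by
  have hβc := hβ.continuous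
  obtain ⟨β', hβ', rfl⟩ := HasLogOn.exists_apply_eq (f := fun u => β u - p)
    (hasContinuousLogs_of_convex convex_univ (by fun_prop) fun u _ =>
      sub_ne_zero.2 (hβ.apply_ne_of_isFixedPt hp u)) (mem_univ 0) hω
  have exp_line (u : ℝ) : Complex.exp (β' u) = β u - p := hβ'.exp_eq u (mem_univ u)
  obtain ⟨G, hG, exp_G⟩ := hH.exists_lift hp
  have exp_G_line (u : ℝ) : Complex.exp (G (1, β' u)) = β (u + 1) - p := by
    rw [exp_G, exp_line, add_sub_cancel, hβ.map_eq]
  obtain ⟨k, hk⟩ := Complex.exp_eq_exp_iff_exists_int.1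
    ((exp_line (0 + 1)).trans (exp_G_line 0).symm)
  have hβ'c : Continuous β' := continuousOn_univ.1 hβ'.continuousOn
  have hGc := hG.continuous
  have line_step (u : ℝ) : G (1, β' u) + k * (2 * Real.pi * Complex.I) = β' (u + 1) :=
    (IsLogOn.add_int_mul ⟨by fun_prop, fun v _ => exp_G_line v⟩ k).eqOn
      (L₂ := fun u => β' (u + 1)) ⟨by fun_prop, fun v _ => exp_line (v + 1)⟩ isPreconnected_univ
      (mem_univ 0) hk.symm (mem_univ u)
  refine ⟨fun x => G x + x.1 * (k * (2 * Real.pi * Complex.I)), β',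
    ⟨hG.add_smul _, ⟨hβ'c, fun u => ?_, fun u v huv hvu heq => ?_⟩, fun ζ => ?_, exp_line⟩, rfl⟩
  · simpa using line_step u
  · exact hβ.ne u v huv hvu (sub_left_injective
      ((exp_line u).symm.trans ((congrArg _ heq).trans (exp_line v))))
  · simp only [Complex.ofReal_one, one_mul, Complex.exp_add, Complex.exp_int_mul_two_pi_mul_I,
      mul_one, exp_G]

lemma IsLogOn.add_exp {ℓ : ℂ → ℂ} {D : Set ℂ} (hℓ : IsLogOn ℓ (fun z => z - p) D) {z : ℂ}
    (hz : z ∈ D) : p + Complex.exp (ℓ z) = z := by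
  rw [hℓ.exp_eq z hz, add_sub_cancel]

lemma HasContinuousLogs.image_log {ℓ : ℂ → ℂ} {D : Set ℂ} (hD : HasContinuousLogs D)
    (hℓ : IsLogOn ℓ (fun z => z - p) D) : HasContinuousLogs (ℓ '' D) :=
  hD.image (r := fun ζ => p + Complex.exp ζ) hℓ.continuousOn (by fun_prop) fun _ hz => hℓ.add_exp hz

namespace IsLogLift

variable {ℓ : ℂ → ℂ} {D U : Set ℂ}

lemma apply_eq_of_lift_eq (h : IsLogLift p H H' β β') {u v : ℝ} (huv : β' u = β' v) :
    β u = β v :=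
  sub_left_injective ((h.exp_line u).symm.trans ((congrArg _ huv).trans (h.exp_line v)))

lemma fixed_point_free (h : IsLogLift p H H' β β') (hℓ : IsLogOn ℓ (fun z => z - p) D)
    (hD : ∀ z ∈ D, H (1, z) ≠ z) : ∀ ζ ∈ ℓ '' D, H' (1, ζ) ≠ ζ := by
  rintro _ ⟨z, hz, rfl⟩ hfix
  have exp_map := h.exp_map (ℓ z)
  rw [hfix, hℓ.add_exp hz, hℓ.exp_eq z hz] at exp_map
  exact hD z hz (sub_left_injective exp_map).symm

lemma map_log_eqOn (h : IsLogLift p H H' β β') (hℓ : IsLogOn ℓ (fun z => z - p) D)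
    (hH : Continuous H) (hU : IsPreconnected U) (hUD : U ⊆ D)
    (hmaps : MapsTo (fun z => H (1, z)) U D) {z₀ : ℂ} (hz₀ : z₀ ∈ U)
    (h₀ : H' (1, ℓ z₀) = ℓ (H (1, z₀))) :
    EqOn (fun z => H' (1, ℓ z)) (fun z => ℓ (H (1, z))) U := by
  refine IsLogOn.eqOn ⟨?_, fun z hz => ?_⟩ (hℓ.comp (by fun_prop) hmaps) hU hz₀ h₀
  · exact h.isotopy.continuous.comp_continuousOn
      (continuousOn_const.prodMk (hℓ.continuousOn.mono hUD))
  · rw [h.exp_map, hℓ.add_exp (hUD hz)]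

lemma line_eqOn (h : IsLogLift p H H' β β') (hℓ : IsLogOn ℓ (fun z => z - p) D)
    (hβ : Continuous β) {I : Set ℝ} (hI : IsPreconnected I) (hID : MapsTo β I D) {u : ℝ}
    (hu : u ∈ I) (h₀ : β' u = ℓ (β u)) : EqOn β' (fun v => ℓ (β v)) I :=
  IsLogOn.eqOn ⟨h.line.continuous.continuousOn, fun v _ => h.exp_line v⟩
    (hℓ.comp hβ.continuousOn hID) hI hu h₀

end IsLogLift

/-- The two pairs of parameters can be joined within a set on which logarithms exist and which is
free of fixed points; it follows that a lift of `β` either closes up along both or along neither. -/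
def Linked (H : ℝ × ℂ → ℂ) (β : ℝ → ℂ) (x y : ℝ × ℝ) : Prop :=
  ∃ D, HasContinuousLogs D ∧ (∀ z ∈ D, H (1, z) ≠ z) ∧ MapsTo β (uIcc x.1 y.1) D ∧
    MapsTo β (uIcc x.2 y.2) D

lemma Linked.lift {x y : ℝ × ℝ} (hxy : Linked H β x y) (h : IsLogLift p H H' β β')
    (hβ : Continuous β) (hp : H (1, p) = p) (hx : β' x.1 = β' x.2) (hy : β y.1 = β y.2) :
    Linked H' β' x y ∧ β' y.1 = β' y.2 := by
  obtain ⟨D, hD, D_free, hD₁, hD₂⟩ := hxy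
  obtain ⟨m, hm, hmx⟩ := HasLogOn.exists_apply_eq (hD (h := fun z => z - p) (by fun_prop)
    fun z hz => sub_ne_zero.2 fun hzp => D_free z hz (hzp ▸ hp)) (hD₁ left_mem_uIcc)
    (h.exp_line x.1)
  have line_eq₁ : EqOn β' (fun u => m (β u)) (uIcc x.1 y.1) :=
    h.line_eqOn hm hβ isPreconnected_uIcc hD₁ left_mem_uIcc hmx.symm
  have line_eq₂ : EqOn β' (fun u => m (β u)) (uIcc x.2 y.2) :=
    h.line_eqOn hm hβ isPreconnected_uIcc hD₂ left_mem_uIcc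
      (by rw [← h.apply_eq_of_lift_eq hx, ← hx, hmx])
  refine ⟨⟨m '' D, hD.image_log hm, h.fixed_point_free hm D_free, ?_, ?_⟩, ?_⟩
  · exact ((mapsTo_image m D).comp hD₁).congr line_eq₁.symm
  · exact ((mapsTo_image m D).comp hD₂).congr line_eq₂.symm
  · exact (line_eq₁ right_mem_uIcc).trans
      ((congrArg m hy).trans (line_eq₂ right_mem_uIcc).symm)

lemma IsSimpleLoopOn.eq_of_apply_eq {E F : Type*} {γ : ℝ → E} {γ' : ℝ → F} {a b : ℝ}
    (hγ : IsSimpleLoopOn γ a b) (hγ' : γ' a = γ' b) {u v : ℝ} (hu : u ∈ Icc a b) (hv : v ∈ Icc a b)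
    (huv : γ u = γ v) : γ' u = γ' v := by
  wlog hle : u ≤ v generalizing u v
  · exact (this hv hu huv.symm (le_of_not_ge hle)).symm
  rcases hle.eq_or_lt with rfl | hlt
  · rfl
  have long : b - a ≤ v - u := not_lt.1 fun hlt' =>
    hγ.ne (u, v) ⟨hu.1, hv.2, sub_pos.2 hlt, hlt'⟩ huv
  obtain rfl : u = a := by linarith [hu.1, hv.2]
  obtain rfl : v = b := by linarith [hv.2]
  exact hγ'

-- Otherwise `β'` would descend to a logarithm of `z - p` on the loop.
lemma IsLogLift.apply_ne_of_mem_logHull (h : IsLogLift p H H' β β') {a b : ℝ}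
    (hβ : Continuous β) (hloop : IsSimpleLoopOn β a b) (hp : p ∈ logHull (β '' Icc a b)) :
    β' a ≠ β' b := by
  intro hclosed
  obtain ⟨V, hV, hVβ⟩ := exists_continuousOn_image_comp_eq isCompact_Icc hβ.continuousOn
    h.line.continuous.continuousOn fun u hu v hv => hloop.eq_of_apply_eq hclosed hu hv
  refine hp ⟨V, hV, ?_⟩
  rintro _ ⟨u, hu, rfl⟩
  rw [hVβ u hu, h.exp_line]

end Lift

/-! ### Lines that recur without fixed points -/

section Recurrence

/-- The pairs of parameters in `[0, n + 1]` at distance at least one that `β` identifies. -/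
def returnPairs {E : Type*} (β : ℝ → E) (n : ℕ) : Set (ℝ × ℝ) :=
  {x | 0 ≤ x.1 ∧ x.1 + 1 ≤ x.2 ∧ x.2 ≤ n + 1 ∧ β x.1 = β x.2}

lemma isCompact_returnPairs {E : Type*} [TopologicalSpace E] [T2Space E] {β : ℝ → E}
    (hβ : Continuous β) (n : ℕ) : IsCompact (returnPairs β n) := by
  have closed : IsClosed (returnPairs β n) :=
    (isClosed_le continuous_const continuous_fst).inter
      ((isClosed_le (continuous_fst.add continuous_const) continuous_snd).inter
        ((isClosed_le continuous_snd continuous_const).inter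
          (isClosed_eq (hβ.comp continuous_fst) (hβ.comp continuous_snd))))
  have compact_square : IsCompact (Icc ((0 : ℝ), (0 : ℝ)) ((n + 1 : ℝ), (n + 1 : ℝ))) :=
    isCompact_Icc
  refine compact_square.of_isClosed_subset closed fun x ⟨h0, h1, hn, _⟩ => ⟨⟨h0, ?_⟩, ?_, hn⟩
  · exact h0.trans ((lt_add_one _).le.trans h1)
  · exact (lt_add_one _).le.trans (h1.trans hn)

lemma IsLogLift.returnPairs_subset {p : ℂ} {H H' : ℝ × ℂ → ℂ} {β β' : ℝ → ℂ}
    (h : IsLogLift p H H' β β') (n : ℕ) : returnPairs β' n ⊆ returnPairs β n :=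
  fun _ ⟨h0, h1, hn, heq⟩ => ⟨h0, h1, hn, h.apply_eq_of_lift_eq heq⟩

-- A shortest return is simple.
lemma IsTranslationLine.exists_isSimpleLoopOn {E : Type*} [TopologicalSpace E] [T2Space E]
    {g : E → E} {β : ℝ → E} (hβ : IsTranslationLine g β) {n : ℕ}
    (hne : (returnPairs β n).Nonempty) :
    ∃ x ∈ returnPairs β n, x.1 + 1 < x.2 ∧ IsSimpleLoopOn β x.1 x.2 := by
  obtain ⟨x, hx, hmin⟩ := (isCompact_returnPairs hβ.continuous n).exists_isMinOn
    (f := fun x : ℝ × ℝ => x.2 - x.1) hne (by fun_prop)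
  obtain ⟨h0, h1, hn, hclosed⟩ := hx
  refine ⟨x, ⟨h0, h1, hn, hclosed⟩, h1.lt_of_ne fun heq => ?_, hclosed,
    fun y ⟨hy₁, hy₂, hpos, hlt⟩ heq => ?_⟩
  · exact hβ.ne x.1 x.2 (heq ▸ lt_add_one _) heq.ge hclosed
  · have far : y.1 + 1 ≤ y.2 := (not_le.1 fun hle => hβ.ne _ _ (sub_pos.1 hpos) hle heq).le
    have minimal : x.2 - x.1 ≤ y.2 - y.1 :=
      hmin ⟨h0.trans hy₁, far, hy₂.trans hn, heq⟩
    exact hlt.not_ge minimal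

/-- A translation line `β` for the end map of `H` whose orbit of `β (1 / 2)` is `n`-periodic, such
that the arc `β '' [0, 1]`, this orbit and their images lie in a set `X` free of fixed points on
which logarithms exist. The labelling `c` splits the return pairs into finitely many classes of
linked pairs. -/
structure RecurrentConfiguration {ι : Type*} (H : ℝ × ℂ → ℂ) (β : ℝ → ℂ) (U X : Set ℂ) (n : ℕ)
    (c : ℝ × ℝ → ι) : Prop where
  isotopy : IsIsotopyFromId H
  line : IsTranslationLine (fun z => H (1, z)) β
  one_le : 1 ≤ n
  periodic : β (1 / 2 + n) = β (1 / 2)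
  isPreconnected : IsPreconnected U
  arc_mem : MapsTo β (Icc 0 1) U
  orbit_mem : ∀ i : ℕ, β (1 / 2 + i) ∈ U
  subset : U ⊆ X
  mapsTo : MapsTo (fun z => H (1, z)) U X
  hasContinuousLogs : HasContinuousLogs X
  fixed_point_free : ∀ z ∈ X, H (1, z) ≠ z
  finite_labels : (c '' returnPairs β n).Finite
  linked : ∀ x ∈ returnPairs β n, ∀ y ∈ returnPairs β n, c x = c y → Linked H β x y

namespace RecurrentConfiguration

variable {ι : Type*} {H H' : ℝ × ℂ → ℂ} {β β' : ℝ → ℂ} {U X : Set ℂ} {n : ℕ} {c : ℝ × ℝ → ι}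
  {p : ℂ} {ℓ : ℂ → ℂ}

lemma returnPairs_nonempty (C : RecurrentConfiguration H β U X n c) :
    (returnPairs β n).Nonempty := by
  have one_le : (1 : ℝ) ≤ n := by exact_mod_cast C.one_le
  exact ⟨(1 / 2, 1 / 2 + n), by norm_num, by simpa [add_comm] using one_le,
    by simp only; linarith, C.periodic.symm⟩

lemma lift (C : RecurrentConfiguration H β U X n c) (hp : H (1, p) = p)
    (hℓ : IsLogOn ℓ (fun z => z - p) X) (h : IsLogLift p H H' β β') (h₀ : β' 0 = ℓ (β 0)) :
    RecurrentConfiguration H' β' (ℓ '' U) (ℓ '' X) n c := by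
  have hβ := C.line.continuous
  have arc_eq : EqOn β' (fun u => ℓ (β u)) (Icc 0 1) :=
    h.line_eqOn hℓ hβ isPreconnected_Icc (C.arc_mem.mono_right C.subset)
      unitInterval.zero_mem h₀
  have map_eq : EqOn (fun z => H' (1, ℓ z)) (fun z => ℓ (H (1, z))) U := by
    refine h.map_log_eqOn hℓ C.isotopy.continuous C.isPreconnected C.subset C.mapsTo
      (C.arc_mem unitInterval.zero_mem) ?_
    rw [← h₀, h.line.map_eq, C.line.map_eq, zero_add, arc_eq unitInterval.one_mem]
  have orbit_eq (i : ℕ) : β' (1 / 2 + i) = ℓ (β (1 / 2 + i)) := by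
    induction i with
    | zero => exact arc_eq ⟨by norm_num, by norm_num⟩
    | succ i ih =>
      rw [Nat.cast_succ, ← add_assoc, ← h.line.map_eq, ih, ← C.line.map_eq]
      exact map_eq (C.orbit_mem i)
  refine ⟨h.isotopy, h.line, C.one_le, ?_, C.isPreconnected.image _ (hℓ.continuousOn.mono C.subset),
    ((mapsTo_image ℓ U).comp C.arc_mem).congr arc_eq.symm, fun i => ?_, image_mono C.subset, ?_,
    C.hasContinuousLogs.image_log hℓ, h.fixed_point_free hℓ C.fixed_point_free,
    C.finite_labels.subset (image_mono (h.returnPairs_subset n)), fun x hx y hy hxy => ?_⟩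
  · rw [orbit_eq, C.periodic, arc_eq ⟨by norm_num, by norm_num⟩]
  · exact orbit_eq i ▸ mem_image_of_mem ℓ (C.orbit_mem i)
  · rintro _ ⟨z, hz, rfl⟩
    exact map_eq hz ▸ mem_image_of_mem ℓ (C.mapsTo hz)
  · exact ((C.linked x (h.returnPairs_subset n hx) y (h.returnPairs_subset n hy) hxy).lift h hβ hp
      hx.2.2.2 (h.returnPairs_subset n hy).2.2.2).1

-- Lift at a fixed point around which a simple loop of the line winds: the loop opens up, together
-- with all the returns that have its label.
lemma exists_ncard_lt (C : RecurrentConfiguration H β U X n c) :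
    ∃ H' β' U' X', RecurrentConfiguration H' β' U' X' n c ∧
      (c '' returnPairs β' n).ncard < (c '' returnPairs β n).ncard := by
  obtain ⟨x, hx, hlong, hloop⟩ := C.line.exists_isSimpleLoopOn C.returnPairs_nonempty
  obtain ⟨p, p_mem, hp⟩ := C.line.exists_fixedPt_mem_logHull C.isotopy hlong hloop
  obtain ⟨ℓ, hℓ⟩ := C.hasContinuousLogs (h := fun z => z - p) (by fun_prop) fun z hz =>
    sub_ne_zero.2 fun hzp => C.fixed_point_free z hz (hzp ▸ hp)
  obtain ⟨H', β', h, h₀⟩ := C.line.exists_isLogLift C.isotopy hp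
    (hℓ.exp_eq _ (C.subset (C.arc_mem unitInterval.zero_mem)))
  refine ⟨H', β', ℓ '' U, ℓ '' X, C.lift hp hℓ h h₀, ncard_lt_ncard ?_ C.finite_labels⟩
  refine (ssubset_iff_of_subset (image_mono (h.returnPairs_subset n))).2
    ⟨c x, mem_image_of_mem c hx, ?_⟩
  rintro ⟨y, hy, hyx⟩
  exact h.apply_ne_of_mem_logHull C.line.continuous hloop p_mem
    ((C.linked y (h.returnPairs_subset n hy) x hx hyx).lift h C.line.continuous hp
      hy.2.2.2 hx.2.2.2).2

lemma false (C : RecurrentConfiguration H β U X n c) : False := by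
  induction hN : (c '' returnPairs β n).ncard using Nat.strong_induction_on
    generalizing H β U X with
  | _ N ih =>
    obtain ⟨H', β', U', X', C', hlt⟩ := C.exists_ncard_lt
    exact ih _ (hN ▸ hlt) C' rfl

end RecurrentConfiguration

end Recurrence

/-! ### Bumps -/

section Bump

variable {E : Type*} [NormedAddCommGroup E] [NormedSpace ℝ E] {a w z : E} {δ : ℝ} {U : Set E}

/-- The map that pushes the centre of the ball `ball a δ` to `a + w` and is the identity outside the
ball. -/
noncomputable def bump (a w : E) (δ : ℝ) (z : E) : E :=
  z + max 0 (1 - ‖z - a‖ / δ) • w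

lemma bump_self : bump a w δ a = a + w := by simp [bump]

lemma bump_zero : bump a 0 δ z = z := by simp [bump]

lemma bump_of_notMem_ball (hδ : 0 < δ) (hz : z ∉ ball a δ) : bump a w δ z = z := by
  rw [mem_ball, not_lt, dist_eq_norm] at hz
  have : 1 - ‖z - a‖ / δ ≤ 0 := sub_nonpos.2 ((one_le_div hδ).2 hz)
  rw [bump, max_eq_left this, zero_smul, add_zero]

lemma approximatesLinearOn_bump (hδ : 0 < δ) :
    ApproximatesLinearOn (bump a w δ) (ContinuousLinearEquiv.refl ℝ E : E →L[ℝ] E) univ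
      (‖w‖₊ / δ.toNNReal) := by
  intro x _ y _
  have lipschitz : |max 0 (1 - ‖x - a‖ / δ) - max 0 (1 - ‖y - a‖ / δ)| ≤ ‖x - y‖ / δ := by
    refine (abs_max_sub_max_le_max _ _ _ _).trans ?_
    rw [sub_self, abs_zero, sub_sub_sub_cancel_left, ← sub_div, abs_div, abs_of_pos hδ]
    refine max_le (by positivity) ?_
    gcongr
    refine (abs_norm_sub_norm_le _ _).trans_eq ?_
    rw [sub_sub_sub_cancel_right, norm_sub_rev]
  calc ‖bump a w δ x - bump a w δ y - (x - y)‖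
      = ‖(max 0 (1 - ‖x - a‖ / δ) - max 0 (1 - ‖y - a‖ / δ)) • w‖ := by
        congr 1; simp only [bump, sub_smul]; abel
    _ ≤ ‖x - y‖ / δ * ‖w‖ := by
        rw [norm_smul, Real.norm_eq_abs]; gcongr
    _ = (‖w‖₊ / δ.toNNReal : NNReal) * ‖x - y‖ := by
        rw [NNReal.coe_div, Real.coe_toNNReal _ hδ.le, coe_nnnorm]; ring

variable [CompleteSpace E]

lemma isHomeomorph_bump (hw : ‖w‖ < δ) : IsHomeomorph (bump a w δ) := by
  have hδ : 0 < δ := (norm_nonneg w).trans_lt hw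
  refine ((approximatesLinearOn_bump hδ).toHomeomorph _ ?_).isHomeomorph
  refine (subsingleton_or_nontrivial E).imp_right ?_
  intro
  rw [ContinuousLinearEquiv.refl_symm, ContinuousLinearEquiv.coe_refl,
    ContinuousLinearMap.nnnorm_id, inv_one]
  exact NNReal.div_lt_one_of_lt (NNReal.coe_lt_coe.1 (by rwa [Real.coe_toNNReal _ hδ.le]))

lemma bump_mem_ball_iff (hw : ‖w‖ < δ) : bump a w δ z ∈ ball a δ ↔ z ∈ ball a δ := by
  have hδ : 0 < δ := (norm_nonneg w).trans_lt hw
  refine ⟨fun h => ?_, fun h => ?_⟩ <;> by_contra hz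
  · exact hz (bump_of_notMem_ball hδ hz ▸ h)
  · exact hz (by rwa [(isHomeomorph_bump hw).injective (bump_of_notMem_ball hδ hz)])

lemma bump_mem_iff (hw : ‖w‖ < δ) (hU : ball a δ ⊆ U) : bump a w δ z ∈ U ↔ z ∈ U := by
  by_cases hz : z ∈ ball a δ
  · exact iff_of_true (hU ((bump_mem_ball_iff hw).2 hz)) (hU hz)
  · rw [bump_of_notMem_ball ((norm_nonneg w).trans_lt hw) hz]

-- The points `y` that can be moved this way form a relatively clopen subset of `U`.
lemma exists_homeomorph_mem_ball (hU : IsOpen U) (hc : IsPreconnected U) {x y : E} (hx : x ∈ U)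
    (hy : y ∈ U) : ∃ θ : E ≃ₜ E, (∀ z, θ z ∈ U ↔ z ∈ U) ∧
      ∃ ρ, closedBall (θ x) ρ ⊆ U ∧ θ y ∈ ball (θ x) ρ := by
  let reachable : Set E := {y | ∃ θ : E ≃ₜ E, (∀ z, θ z ∈ U ↔ z ∈ U) ∧
    ∃ ρ, closedBall (θ x) ρ ⊆ U ∧ θ y ∈ ball (θ x) ρ}
  have self_mem : x ∈ reachable := by
    obtain ⟨r, hr, hrU⟩ := nhds_basis_closedBall.mem_iff.1 (hU.mem_nhds hx)
    exact ⟨Homeomorph.refl _, fun z => Iff.rfl, r, hrU, mem_ball_self hr⟩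
  have isOpen_reachable : IsOpen reachable := by
    refine isOpen_iff_mem_nhds.2 ?_
    rintro y ⟨θ, hθ, ρ, hρ, hy⟩
    filter_upwards [(isOpen_ball.preimage θ.continuous).mem_nhds hy] with z hz
    exact ⟨θ, hθ, ρ, hρ, hz⟩
  refine hc.subset_of_closure_inter_subset isOpen_reachable ⟨x, hx, self_mem⟩ ?_ hy
  rintro z ⟨hz, hzU⟩
  rcases eq_or_ne x z with rfl | hxz
  · exact self_mem
  obtain ⟨r, hr, hrU⟩ := Metric.isOpen_iff.1 hU z hzU
  obtain ⟨z', ⟨θ, hθ, ρ, hρ, hz'⟩, hzz'⟩ :=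
    Metric.mem_closure_iff.1 hz (min r (dist x z)) (lt_min hr (dist_pos.2 hxz))
  rw [dist_comm, dist_eq_norm] at hzz'
  let φ := (isHomeomorph_bump (a := z) hzz').homeomorph
  have φ_x : φ x = x := bump_of_notMem_ball (lt_min hr (dist_pos.2 hxz)) fun h =>
    (mem_ball.1 h).not_ge (min_le_right _ _)
  have φ_z : φ z = z' := bump_self.trans (add_sub_cancel _ _)
  refine ⟨φ.trans θ, fun y => ?_, ρ, ?_⟩
  · exact (hθ _).trans (bump_mem_iff hzz' ((ball_subset_ball (min_le_left _ _)).trans hrU))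
  · simp only [Homeomorph.trans_apply, φ_x, φ_z]
    exact ⟨hρ, hz'⟩

end Bump

/-! ### Translation arcs -/

section TranslationArc

/-- A *translation arc* of `g`: a simple arc from a point to its image that meets its own image only
at endpoints. Only the restriction of `α` to `[0, 1]` matters. -/
structure IsTranslationArc {E : Type*} [TopologicalSpace E] (g : E → E) (α : ℝ → E) : Prop where
  continuous : Continuous α
  map_zero : g (α 0) = α 1
  injOn : InjOn α (Icc 0 1)
  ne : ∀ s ∈ Ioo (0 : ℝ) 1, ∀ u ∈ Ioo (0 : ℝ) 1, g (α s) ≠ α u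

section Normed

lemma radius_pos {X : Type*} [MetricSpace X] {y p q : X} {R : ℝ} (hp : p ∈ sphere y R)
    (hq : q ∈ sphere y R) (hpq : p ≠ q) : 0 < R := by
  refine (dist_nonneg.trans_eq hp).lt_of_ne ?_
  rintro rfl
  rw [sphere_zero, mem_singleton_iff] at hp hq
  exact hpq (hp.trans hq.symm)

variable {E : Type*} [NormedAddCommGroup E] [NormedSpace ℝ E] {y p q : E} {R : ℝ}

/-- The broken segment from `p` through `y` to `q`, parametrized over `[0, 1]`. -/
noncomputable def brokenSegment (y p q : E) (s : ℝ) : E :=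
  y + max 0 (1 - 2 * s) • (p - y) + max 0 (2 * s - 1) • (q - y)

lemma continuous_brokenSegment : Continuous (brokenSegment y p q) := by
  unfold brokenSegment; fun_prop

lemma brokenSegment_of_le {s : ℝ} (hs : s ≤ 1 / 2) :
    brokenSegment y p q s = y + (1 - 2 * s) • (p - y) := by
  rw [brokenSegment, max_eq_right (by linarith), max_eq_left (by linarith), zero_smul, add_zero]

lemma brokenSegment_of_ge {s : ℝ} (hs : 1 / 2 ≤ s) :
    brokenSegment y p q s = y + (2 * s - 1) • (q - y) := by
  rw [brokenSegment, max_eq_left (by linarith), max_eq_right (by linarith), zero_smul, add_zero]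

lemma dist_brokenSegment (hp : p ∈ sphere y R) (hq : q ∈ sphere y R) (s : ℝ) :
    dist (brokenSegment y p q s) y = |2 * s - 1| * R := by
  rw [mem_sphere_iff_norm] at hp hq
  rcases le_total s (1 / 2) with hs | hs
  · rw [brokenSegment_of_le hs, dist_self_add_left, norm_smul, hp, Real.norm_eq_abs, abs_sub_comm]
  · rw [brokenSegment_of_ge hs, dist_self_add_left, norm_smul, hq, Real.norm_eq_abs]

lemma brokenSegment_injective (hp : p ∈ sphere y R) (hq : q ∈ sphere y R) (hpq : p ≠ q) :
    Function.Injective (brokenSegment y p q) := by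
  intro s u hsu
  wlog hle : s ≤ u generalizing s u
  · exact (this hsu.symm (le_of_not_ge hle)).symm
  have hdist : |2 * s - 1| * R = |2 * u - 1| * R := by
    rw [← dist_brokenSegment hp hq, ← dist_brokenSegment hp hq, hsu]
  rcases abs_eq_abs.1 (mul_right_cancel₀ (radius_pos hp hq hpq).ne' hdist) with h | h
  · linarith
  rw [brokenSegment_of_le (by linarith), brokenSegment_of_ge (by linarith),
    show 2 * u - 1 = 1 - 2 * s by linarith, add_right_inj] at hsu
  by_contra hne
  refine hpq (sub_left_injective (smul_right_injective E (?_ : 1 - 2 * s ≠ 0) hsu))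
  exact fun hs => hne (by linarith)

lemma exists_mem_ball_apply_mem_ball (g : E ≃ₜ E) (hp : p ∈ ball y R) (hgp : g p ∈ closedBall y R) :
    ∃ z ∈ ball y R, g z ∈ ball y R := by
  rw [← closure_ball y (dist_nonneg.trans_lt hp).ne'] at hgp
  obtain ⟨_, ⟨z, hz, rfl⟩, hgz⟩ := _root_.mem_closure_iff.1 hgp _ (g.isOpenMap _ isOpen_ball)
    (mem_image_of_mem g hp)
  exact ⟨z, hz, hgz⟩

-- The critical ball: `b` minimizes `max (dist z y) (dist (g z) y)`.
lemma exists_sphere_ball_disjoint [ProperSpace E] (g : E ≃ₜ E) :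
    ∃ b, ∃ R ≤ dist (g y) y, b ∈ sphere y R ∧ g b ∈ sphere y R ∧
      ∀ z ∈ ball y R, g z ∉ ball y R := by
  have hg := g.continuous
  obtain ⟨b, -, hmin⟩ := (isCompact_closedBall y (dist (g y) y)).exists_isMinOn
    (f := fun z => max (dist z y) (dist (g z) y)) ⟨y, mem_closedBall_self dist_nonneg⟩ (by fun_prop)
  obtain ⟨R, hR⟩ : ∃ R, R = max (dist b y) (dist (g b) y) := ⟨_, rfl⟩
  have hRy : R ≤ dist (g y) y := by
    simpa only [← hR, mem_ofPred_eq, dist_self, max_eq_right dist_nonneg] using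
      hmin (mem_closedBall_self (dist_nonneg (x := g y) (y := y)))
  have displaced : ∀ z ∈ ball y R, g z ∉ ball y R := by
    intro z hz hgz
    have : max (dist b y) (dist (g b) y) ≤ max (dist z y) (dist (g z) y) :=
      hmin (ball_subset_closedBall (ball_subset_ball hRy hz))
    exact (max_lt hz hgz).not_ge (hR ▸ this)
  have hb : dist b y ≤ R := hR ▸ le_max_left _ _
  have hgb : dist (g b) y ≤ R := hR ▸ le_max_right _ _
  refine ⟨b, R, hRy, hb.eq_of_not_lt fun h => ?_, hgb.eq_of_not_lt fun h => ?_, displaced⟩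
  · obtain ⟨z, hz, hgz⟩ := exists_mem_ball_apply_mem_ball g h hgb
    exact displaced z hz hgz
  · obtain ⟨z, hz, hgz⟩ := exists_mem_ball_apply_mem_ball g.symm h (by rwa [g.symm_apply_apply])
    exact displaced _ hgz (by rwa [g.apply_symm_apply])

lemma exists_isTranslationArc_mapsTo_closedBall [ProperSpace E] (g : E ≃ₜ E) {ρ : ℝ}
    (hy : g y ∈ ball y ρ) (hne : ∀ z ∈ closedBall y ρ, g z ≠ z) :
    ∃ α, IsTranslationArc g α ∧ α (1 / 2) = y ∧ MapsTo α (Icc 0 1) (closedBall y ρ) := by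
  obtain ⟨b, R, hR, hb, hgb, displaced⟩ :=
    exists_sphere_ball_disjoint (y := y) g
  have hRρ : R ≤ ρ := hR.trans (le_of_lt hy)
  have hbg : b ≠ g b :=
    (hne b (closedBall_subset_closedBall hRρ (sphere_subset_closedBall hb))).symm
  have hR₀ : 0 < R := radius_pos hb hgb hbg
  have hdist := dist_brokenSegment hb hgb
  have mem_ball_of_mem_Ioo : ∀ s ∈ Ioo (0 : ℝ) 1, brokenSegment y b (g b) s ∈ ball y R := by
    intro s hs
    have : |2 * s - 1| < 1 := abs_lt.2 ⟨by linarith [hs.1], by linarith [hs.2]⟩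
    rw [mem_ball, hdist]
    exact mul_lt_of_lt_one_left hR₀ this
  refine ⟨brokenSegment y b (g b), ⟨continuous_brokenSegment, ?_,
    (brokenSegment_injective hb hgb hbg).injOn, fun s hs u hu heq => ?_⟩, ?_, fun s hs => ?_⟩
  · rw [brokenSegment_of_le (by norm_num), brokenSegment_of_ge (by norm_num)]
    norm_num
  · exact displaced _ (mem_ball_of_mem_Ioo s hs) (heq ▸ mem_ball_of_mem_Ioo u hu)
  · rw [brokenSegment_of_le le_rfl]; norm_num
  · have : |2 * s - 1| ≤ 1 := abs_le.2 ⟨by linarith [hs.1], by linarith [hs.2]⟩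
    rw [mem_closedBall, hdist]
    exact (mul_le_of_le_one_left hR₀.le this).trans hRρ

lemma IsTranslationArc.conj {E F : Type*} [TopologicalSpace E] [TopologicalSpace F] {g : E → E}
    {α : ℝ → F} (θ : E ≃ₜ F) (hα : IsTranslationArc (fun z => θ (g (θ.symm z))) α) :
    IsTranslationArc g fun s => θ.symm (α s) where
  continuous := θ.symm.continuous.comp hα.continuous
  map_zero := θ.injective <| by rw [hα.map_zero, θ.apply_symm_apply]
  injOn := θ.symm.injective.comp_injOn hα.injOn
  ne s hs u hu h := hα.ne s hs u hu (by rw [h, θ.apply_symm_apply])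

lemma exists_isTranslationArc [ProperSpace E] (g : E ≃ₜ E) {U : Set E} (hU : IsOpen U)
    (hc : IsPreconnected U) (hy : y ∈ U) (hgy : g y ∈ U) (hne : ∀ z ∈ U, g z ≠ z) :
    ∃ α, IsTranslationArc g α ∧ α (1 / 2) = y ∧ MapsTo α (Icc 0 1) U := by
  obtain ⟨θ, hθ, ρ, hρ, hgy⟩ := exists_homeomorph_mem_ball hU hc hy hgy
  have symm_mem {z : E} (hz : z ∈ U) : θ.symm z ∈ U := (hθ _).1 (by rwa [θ.apply_symm_apply])
  obtain ⟨α, hα, hα_half, hαρ⟩ := exists_isTranslationArc_mapsTo_closedBall (y := θ y)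
    (θ.symm.trans (g.trans θ)) (by simpa using hgy) fun z hz h =>
      hne _ (symm_mem (hρ hz)) (θ.injective (by simpa using h))
  exact ⟨_, hα.conj θ, by rw [hα_half, θ.symm_apply_apply], fun s hs => symm_mem (hρ (hαρ hs))⟩

end Normed

section Iterate

variable {E : Type*} [TopologicalSpace E] {g : E ≃ₜ E} {α : ℝ → E}

/-- The concatenation of the images of the arc `α '' [0, 1]` under the iterates of `g`. -/
noncomputable def iterateArc (g : E ≃ₜ E) (α : ℝ → E) (u : ℝ) : E := (g ^ ⌊u⌋) (α (Int.fract u))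

lemma zpow_add_one_apply (g : E ≃ₜ E) (n : ℤ) (z : E) : (g ^ (n + 1)) z = (g ^ n) (g z) := by
  rw [zpow_add_one]; rfl

lemma iterateArc_eq (h : g (α 0) = α 1) (n : ℤ) {u : ℝ} (hu : u ∈ Icc (n : ℝ) (n + 1)) :
    iterateArc g α u = (g ^ n) (α (u - n)) := by
  rcases hu.2.lt_or_eq with hlt | rfl
  · rw [iterateArc, Int.fract, Int.floor_eq_iff.2 ⟨hu.1, hlt⟩]
  · rw [iterateArc, Int.floor_add_one, Int.fract_add_one, Int.floor_intCast, Int.fract_intCast,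
      zpow_add_one_apply, h, add_sub_cancel_left]

lemma continuous_iterateArc (hα : Continuous α) (h : g (α 0) = α 1) :
    Continuous (iterateArc g α) := by
  have locallyFinite : LocallyFinite fun n : ℤ => Icc (n : ℝ) (n + 1) :=
    locallyFinite_Icc_of_tendsto tendsto_intCast_atTop_atTop
      (tendsto_atBot_add_const_right _ 1 (tendsto_intCast_atBot_iff.2 tendsto_id))
  refine locallyFinite.continuous (iUnion_Icc_intCast ℝ) (fun _ => isClosed_Icc) fun n => ?_
  exact ((g ^ n).continuous.comp (hα.comp (continuous_sub_right _))).continuousOn.congr fun u hu =>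
    iterateArc_eq h n hu

lemma IsTranslationArc.isTranslationLine_iterateArc (hα : IsTranslationArc g α) :
    IsTranslationLine g (iterateArc g α) where
  continuous := continuous_iterateArc hα.continuous hα.map_zero
  map_eq u := by
    rw [iterateArc, iterateArc, Int.floor_add_one, Int.fract_add_one, add_comm, zpow_one_add]; rfl
  ne u v huv hle heq := by
    have floor_le := Int.floor_le u
    have lt_floor := Int.lt_floor_add_one u
    rw [iterateArc_eq hα.map_zero ⌊u⌋ ⟨floor_le, lt_floor.le⟩] at heq
    rcases le_or_gt v (⌊u⌋ + 1) with hv | hv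
    · rw [iterateArc_eq hα.map_zero ⌊u⌋ ⟨floor_le.trans huv.le, hv⟩] at heq
      have := hα.injOn ⟨by linarith, by linarith⟩ ⟨by linarith, by linarith⟩
        ((g ^ ⌊u⌋).injective heq)
      exact huv.ne (sub_left_injective this)
    · rw [iterateArc_eq hα.map_zero (⌊u⌋ + 1) ⟨by push_cast; linarith, by push_cast; linarith⟩,
        zpow_add_one_apply] at heq
      refine hα.ne _ ⟨?_, ?_⟩ _ ⟨?_, ?_⟩ ((g ^ ⌊u⌋).injective heq).symm <;> push_cast <;> linarith

lemma IsTranslationArc.exists_isTranslationLine (hα : IsTranslationArc g α) :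
    ∃ β, IsTranslationLine g β ∧ EqOn β α (Icc 0 1) :=
  ⟨iterateArc g α, hα.isTranslationLine_iterateArc, fun u hu => by
    rw [iterateArc_eq hα.map_zero 0 (by simpa using hu), zpow_zero, Int.cast_zero, sub_zero]; rfl⟩

end Iterate

lemma IsTranslationLine.iterate_eq {E : Type*} [TopologicalSpace E] {g : E → E} {β : ℝ → E}
    (hβ : IsTranslationLine g β) (u : ℝ) (i : ℕ) : g^[i] (β u) = β (u + i) := by
  induction i with
  | zero => simp
  | succ i ih => rw [Function.iterate_succ_apply', ih, hβ.map_eq, Nat.cast_succ, add_assoc]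

lemma abs_sub_lt_of_floor_eq {η s t : ℝ} (hη : 0 < η) (h : ⌊s / η⌋ = ⌊t / η⌋) : |s - t| < η := by
  have := Int.abs_sub_lt_one_of_floor_eq_floor h
  rwa [← sub_div, abs_div, abs_of_pos hη, div_lt_one hη] at this

lemma finite_floor_image_returnPairs {E : Type*} (β : ℝ → E) (n : ℕ) {η : ℝ} (hη : 0 < η) :
    ((fun x : ℝ × ℝ => (⌊x.1 / η⌋, ⌊x.2 / η⌋)) '' returnPairs β n).Finite := by
  have mem_Icc {s : ℝ} (h₀ : 0 ≤ s) (hn : s ≤ n + 1) : ⌊s / η⌋ ∈ Icc 0 ⌊(n + 1) / η⌋ :=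
    ⟨Int.floor_nonneg.2 (div_nonneg h₀ hη.le), Int.floor_mono (div_le_div_of_nonneg_right hn hη.le)⟩
  refine ((finite_Icc 0 ⌊(n + 1) / η⌋).prod (finite_Icc 0 ⌊(n + 1) / η⌋)).subset ?_
  rintro _ ⟨x, ⟨h₀, h₁, hn, -⟩, rfl⟩
  exact ⟨mem_Icc h₀ (by linarith), mem_Icc (by linarith) hn⟩

lemma IsTranslationLine.exists_ball_displaced {E : Type*} [PseudoMetricSpace E] [T2Space E]
    {g : E → E} {β : ℝ → E} (hβ : IsTranslationLine g β) (hg : Continuous g) (a b : ℝ) :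
    ∃ ε > 0, ∀ u ∈ Icc a b, ∀ z ∈ ball (β u) ε, g z ≠ z := by
  have compact_image : IsCompact (β '' Icc a b) := isCompact_Icc.image hβ.continuous
  obtain ⟨ε, hε, h⟩ := compact_image.exists_thickening_subset_open
    (isOpen_ne_fun hg continuous_id) (by
      rintro _ ⟨u, -, rfl⟩
      exact (hβ.map_eq u).trans_ne (hβ.ne u (u + 1) (lt_add_one u) le_rfl).symm)
  exact ⟨ε, hε, fun u hu z hz => h (ball_subset_thickening (mem_image_of_mem β hu) _ hz)⟩

-- Returns whose parameters lie in the same cell of a fine grid stay in one small ball.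
lemma IsTranslationLine.exists_label {H : ℝ × ℂ → ℂ} {β : ℝ → ℂ}
    (hβ : IsTranslationLine (fun z => H (1, z)) β) (hH : Continuous H) (n : ℕ) :
    ∃ c : ℝ × ℝ → ℤ × ℤ, (c '' returnPairs β n).Finite ∧
      ∀ x ∈ returnPairs β n, ∀ y ∈ returnPairs β n, c x = c y → Linked H β x y := by
  obtain ⟨ε, hε, displaced⟩ := hβ.exists_ball_displaced (by fun_prop) 0 (n + 1)
  obtain ⟨η, hη, hβη⟩ := Metric.uniformContinuousOn_iff.1
    (isCompact_Icc.uniformContinuousOn_of_continuous (s := Icc (0 : ℝ) (n + 1))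
      hβ.continuous.continuousOn) ε hε
  have mapsTo_ball {s t : ℝ} (hs : s ∈ Icc (0 : ℝ) (n + 1)) (ht : t ∈ Icc (0 : ℝ) (n + 1))
      (hst : ⌊s / η⌋ = ⌊t / η⌋) : MapsTo β (uIcc s t) (ball (β s) ε) := by
    intro u hu
    refine hβη u (ordConnected_Icc.uIcc_subset hs ht hu) s hs ?_
    rw [Real.dist_eq]
    exact (abs_sub_left_of_mem_uIcc hu).trans_lt (abs_sub_lt_of_floor_eq hη hst.symm)
  refine ⟨_, finite_floor_image_returnPairs β n hη, ?_⟩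
  rintro x ⟨x₀, x₁, x₂, hx⟩ y ⟨y₀, y₁, y₂, -⟩ hxy
  have fst_mem : x.1 ∈ Icc (0 : ℝ) (n + 1) := ⟨x₀, by linarith⟩
  refine ⟨ball (β x.1) ε, hasContinuousLogs_of_convex (convex_ball _ _), displaced _ fst_mem,
    mapsTo_ball fst_mem ⟨y₀, by linarith⟩ (congrArg Prod.fst hxy), ?_⟩
  rw [hx]
  exact mapsTo_ball ⟨by linarith, x₂⟩ ⟨by linarith, y₂⟩ (congrArg Prod.snd hxy)

end TranslationArc

/-! ### Closing an orbit -/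

section Closing

lemma exists_iterate_dist_lt {X : Type*} [PseudoMetricSpace X] {f : X → X} {K : Set X}
    (hne : K.Nonempty) (hK : IsCompact K) (hf : MapsTo f K K) {δ : ℝ} (hδ : 0 < δ) :
    ∃ n, 1 ≤ n ∧ ∃ b ∈ K, dist (f^[n] b) b < δ := by
  obtain ⟨x, hx⟩ := hne
  obtain ⟨a, -, φ, hφ, hlim⟩ := hK.tendsto_subseq fun n => hf.iterate n hx
  obtain ⟨m, hm⟩ := Metric.cauchySeq_iff.1 hlim.cauchySeq δ hδ
  have hlt : φ m < φ (m + 1) := hφ m.lt_succ_self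
  refine ⟨φ (m + 1) - φ m, by lia, f^[φ m] x, hf.iterate _ hx, ?_⟩
  rw [← Function.iterate_add_apply, Nat.sub_add_cancel hlt.le]
  exact hm (m + 1) m.le_succ m le_rfl

lemma exists_ball_displaced {X : Type*} [PseudoMetricSpace X] [T2Space X] {f : X → X} {K U : Set X}
    (hf : Continuous f) (hK : IsCompact K) (hU : IsOpen U) (hKU : K ⊆ U) (hne : ∀ z ∈ K, f z ≠ z) :
    ∃ δ > 0, ∀ x ∈ K, ball x δ ⊆ U ∧ ∀ z ∈ ball x δ, f z ∉ ball x δ := by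
  obtain ⟨δ, hδ, h⟩ := lebesgue_number_lemma_of_metric
    (c := fun V : {V : Set X // IsOpen V ∧ V ⊆ U ∧ ∀ z ∈ V, f z ∉ V} => V.1) hK (fun V => V.2.1)
    fun x hx => by
      obtain ⟨v, w, hv, hw, hxv, hxw, hvw⟩ := t2_separation (hne x hx).symm
      refine mem_iUnion.2 ⟨⟨U ∩ (v ∩ f ⁻¹' w), hU.inter (hv.inter (hw.preimage hf)),
        inter_subset_left, ?_⟩, hKU hx, hxv, hxw⟩
      exact fun z hz hfz => Set.disjoint_left.1 hvw hfz.2.1 hz.2.2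
  refine ⟨δ, hδ, fun x hx => ?_⟩
  obtain ⟨⟨V, _, hVU, hV⟩, hxV⟩ := h x hx
  exact ⟨hxV.trans hVU, fun z hz hfz => hV z (hxV hz) (hxV hfz)⟩

variable {E : Type*} [NormedAddCommGroup E] [NormedSpace ℝ E] {f : E → E} {a w z : E} {δ : ℝ}

-- Before its first return the orbit avoids the ball, so the bump does not affect it.
lemma iterate_bump_comp (hδ : 0 < δ) {b : E} {n : ℕ}
    (h : ∀ k < n, 1 ≤ k → f^[k] b ∉ ball a δ) {k : ℕ} (hk : k < n) :
    (fun z => bump a w δ (f z))^[k] b = f^[k] b := by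
  induction k with
  | zero => rfl
  | succ k ih =>
    rw [Function.iterate_succ_apply', ih (k.lt_succ_self.trans hk), Function.iterate_succ_apply']
    refine bump_of_notMem_ball hδ ?_
    rw [← Function.iterate_succ_apply' f]
    exact h _ hk k.succ_pos

-- Close up a nearly closed orbit of minimal length: by minimality its intermediate points stay
-- away from its end, where it is pushed back to its beginning.
lemma exists_bump_isPeriodicPt {K : Set E} (hne : K.Nonempty) (hK : IsCompact K)
    (hf : MapsTo f K K) (hδ : 0 < δ) :
    ∃ a ∈ K, ∃ w, ‖w‖ < δ ∧ ∃ n, 1 ≤ n ∧ ∃ b,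
      Function.IsPeriodicPt (fun z => bump a w δ (f z)) n b ∧
      ∀ k, (fun z => bump a w δ (f z))^[k] b ∈ K := by
  classical
  have returns := exists_iterate_dist_lt hne hK hf hδ
  obtain ⟨hn, b, hb, hbδ⟩ := Nat.find_spec returns
  have minimal := fun k => Nat.find_min returns (m := k)
  generalize Nat.find returns = n at hn hbδ minimal
  obtain ⟨n, rfl⟩ := Nat.exists_eq_succ_of_ne_zero (Nat.one_le_iff_ne_zero.1 hn)
  set a := f^[n.succ] b with ha
  have avoids : ∀ k < n.succ, 1 ≤ k → f^[k] b ∉ ball a δ := by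
    refine fun k hk hk₁ hball => minimal (n.succ - k) (by lia) ⟨by lia, _, hf.iterate k hb, ?_⟩
    rwa [← Function.iterate_add_apply, Nat.sub_add_cancel hk.le, dist_comm]
  have iterate_eq {k : ℕ} := iterate_bump_comp (w := b - a) (k := k) hδ avoids
  have periodic : Function.IsPeriodicPt (fun z => bump a (b - a) δ (f z)) n.succ b := by
    rw [Function.IsPeriodicPt, Function.IsFixedPt, Function.iterate_succ_apply',
      iterate_eq n.lt_succ_self, ← Function.iterate_succ_apply' f, ← ha, bump_self,
      add_sub_cancel]
  refine ⟨a, hf.iterate _ hb, b - a, ?_, n.succ, hn, b, periodic, fun k => ?_⟩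
  · rwa [← dist_eq_norm, dist_comm]
  · rw [← periodic.iterate_mod_apply, iterate_eq (Nat.mod_lt _ hn)]
    exact hf.iterate _ hb

lemma isFixedPt_of_isFixedPt_bump_comp [CompleteSpace E] (hw : ‖w‖ < δ)
    (hf : ∀ z ∈ ball a δ, f z ∉ ball a δ) (hz : bump a w δ (f z) = z) : f z = z := by
  by_cases h : f z ∈ ball a δ
  · exact absurd h (hf z (hz ▸ (bump_mem_ball_iff hw).2 h))
  · rwa [bump_of_notMem_ball ((norm_nonneg w).trans_lt hw) h] at hz

lemma mapsTo_bump_comp [CompleteSpace E] {U : Set E} (hw : ‖w‖ < δ) (hU : ball a δ ⊆ U) :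
    MapsTo (fun z => bump a w δ (f z)) U (U ∪ f '' U) := by
  intro z hz
  by_cases h : f z ∈ ball a δ
  · exact Or.inl (hU ((bump_mem_ball_iff hw).2 h))
  · exact Or.inr ⟨z, hz, (bump_of_notMem_ball ((norm_nonneg w).trans_lt hw) h).symm⟩

lemma IsIsotopyFromId.exists_bump_comp [CompleteSpace E] {H : ℝ × E → E} (hH : IsIsotopyFromId H)
    (a : E) (hw : ‖w‖ < δ) :
    ∃ H', IsIsotopyFromId H' ∧ ∀ z, H' (1, z) = bump a w δ (H (1, z)) := by
  have hHc := hH.continuous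
  let τ : ℝ → ℝ := fun t => max 0 (min 1 t)
  have norm_lt (t : ℝ) : ‖τ t • w‖ < δ := by
    rw [norm_smul, Real.norm_of_nonneg (le_max_left _ _)]
    exact (mul_le_of_le_one_left (norm_nonneg _) (max_le zero_le_one (min_le_left _ _))).trans_lt hw
  refine ⟨fun x => bump a (τ x.1 • w) δ (H x), ⟨?_, fun t => ?_, fun z => ?_⟩, fun z => ?_⟩
  · simp only [bump, τ]; fun_prop
  · exact (isHomeomorph_bump (norm_lt t)).injective.comp (hH.injective t)
  · simp [τ, bump_zero, hH.map_zero]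
  · simp [τ]

end Closing

/-! ### Periodic orbits force fixed points -/

lemma exists_isCompact_isPreconnected_mem {X : Type*} [TopologicalSpace X] {C U : Set X}
    (hU : IsPathConnected U) (hC : IsCompact C) (hCc : IsPreconnected C) (hCU : C ⊆ U) {n : ℕ}
    {x : Fin (n + 1) → X} (hx : ∀ i, x i ∈ U) (hx₀ : x 0 ∈ C) :
    ∃ V, IsCompact V ∧ IsPreconnected V ∧ C ⊆ V ∧ V ⊆ U ∧ ∀ i, x i ∈ V := by
  obtain ⟨γ, hγU, hγ⟩ := hU.exists_path_through_family x hx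
  exact ⟨C ∪ range γ, hC.union (isCompact_range γ.continuous),
    hCc.union _ hx₀ (hγ 0) (isPreconnected_range γ.continuous), subset_union_left,
    union_subset hCU hγU, fun i => Or.inr (hγ i)⟩

lemma IsIsotopyFromId.exists_fixedPt_mem_Fill {H : ℝ × ℂ → ℂ} (hH : IsIsotopyFromId H)
    {g : ℂ ≃ₜ ℂ} (hg : (fun z => H (1, z)) = g) {U : Set ℂ} (hU : IsOpen U) (hc : IsConnected U)
    {b : ℂ} {n : ℕ} (hn : 1 ≤ n) (hb : Function.IsPeriodicPt g n b) (orbit_mem : ∀ i, g^[i] b ∈ U) :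
    ∃ z ∈ Fill (U ∪ g '' U), g z = z := by
  by_contra! hne
  obtain ⟨α, hα, hα_half, hαU⟩ := exists_isTranslationArc g hU hc.isPreconnected (orbit_mem 0)
    (orbit_mem 1) fun z hz => hne z (subset_union_left (Or.inl hz))
  obtain ⟨β, hβ, hβα⟩ := hα.exists_isTranslationLine
  have β_half : β (1 / 2) = b := (hβα ⟨by norm_num, by norm_num⟩).trans hα_half
  have orbit_eq (i : ℕ) : β (1 / 2 + i) = g^[i] b := by rw [← hβ.iterate_eq, β_half]
  obtain ⟨V, hV, hVc, arc_subset, hVU, orbit_mem_V⟩ := exists_isCompact_isPreconnected_mem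
    (hU.isConnected_iff_isPathConnected.1 hc) (isCompact_Icc.image hβ.continuous)
    (isPreconnected_Icc.image _ hβ.continuous.continuousOn) (hαU.congr hβα.symm).image_subset
    (fun i : Fin (n + 1) => orbit_mem i) ⟨1 / 2, ⟨by norm_num, by norm_num⟩, β_half⟩
  rw [← hg] at hβ
  obtain ⟨c, hc_finite, hc_linked⟩ := hβ.exists_label hH.continuous n
  exact RecurrentConfiguration.false {
    isotopy := hH
    line := hβ
    one_le := hn
    periodic := by rw [orbit_eq, hb, β_half]
    isPreconnected := hVc
    arc_mem := mapsTo_iff_image_subset.2 arc_subset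
    orbit_mem := fun i => by
      rw [orbit_eq, ← hb.iterate_mod_apply]
      exact orbit_mem_V ⟨i % n, (Nat.mod_lt _ hn).trans n.lt_succ_self⟩
    subset := subset_union_left.trans subset_union_left
    mapsTo := hg ▸ (mapsTo_image g V).mono_right (subset_union_right.trans subset_union_left)
    hasContinuousLogs := hasContinuousLogs_Fill (hV.union (hV.image g.continuous))
    fixed_point_free := fun z hz =>
      (congrFun hg z).trans_ne (hne z (Fill_mono (union_subset_union hVU (image_mono hVU)) hz))
    finite_labels := hc_finite
    linked := hc_linked }

end FixedPointInFill

open FixedPointInFill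

/-- An orientation-preserving homeomorphism of the plane with a nonempty
compact invariant set `K` and a connected open neighbourhood `U` of `K`
has a fixed point in `Fill (U ∪ f U)`. -/
theorem fixed_point_in_fill (f : ℂ ≃ₜ ℂ) (hor : OrientationPreserving f)
    (K : Set ℂ) (hKne : K.Nonempty) (hKc : IsCompact K) (hKinv : f '' K = K)
    (U : Set ℂ) (hUopen : IsOpen U) (hUconn : IsConnected U) (hKU : K ⊆ U) :
    ∃ z ∈ Fill (U ∪ f '' U), f z = z := by
  by_contra! hne
  obtain ⟨H, hH, hHhom, hH₀, hH₁⟩ := hor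
  have isotopy : IsIsotopyFromId H := ⟨hH, fun t => (hHhom t).injective, hH₀⟩
  obtain ⟨δ, hδ, displaced⟩ := exists_ball_displaced f.continuous hKc hUopen hKU fun z hz =>
    hne z (subset_union_left (Or.inl (hKU hz)))
  obtain ⟨a, ha, w, hw, n, hn, b, periodic, orbit_mem⟩ :=
    exists_bump_isPeriodicPt hKne hKc (mapsTo_iff_image_subset.2 hKinv.subset) hδ
  obtain ⟨ball_subset, displaced⟩ := displaced a ha
  let g : ℂ ≃ₜ ℂ := f.trans (isHomeomorph_bump (a := a) hw).homeomorph
  obtain ⟨H', isotopy', hH'⟩ := isotopy.exists_bump_comp a hw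
  obtain ⟨z, hz, hgz⟩ := isotopy'.exists_fixedPt_mem_Fill (g := g)
    (by simp only [hH', hH₁]; rfl) hUopen hUconn hn periodic fun i => hKU (orbit_mem i)
  exact hne z (Fill_mono (union_subset subset_union_left
    (mapsTo_bump_comp hw ball_subset).image_subset) hz)
    (isFixedPt_of_isFixedPt_bump_comp hw displaced hgz)
end
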